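/- Let N ≥ 1, 1 < p < 2, 0 < γ < p, λ₊, λ₋ > 0, δ₀ > 0, M > 0, and define V(a) := |a|^{(p−2)/2} a for a ∈ ℝ^N (with V(0) := 0). There exists C > 0, depending only on N, p, γ, λ₊, λ₋, δ₀ and M, with the following property. Let Ω ⊆ ℝ^N be open and bounded, δ ∈ [0, δ₀], and let u be a local minimizer of J_δ on Ω with closure(B_{4R}(x₀)) ⊆ Ω and sup_{B_{4R}(x₀)} |u| ≤ M. Let ū ∈ C¹(B_{2R}(x₀)) ∩ C(closure(B_{2R}(x₀))) satisfy: (i) ∫ |∇ū|^{p−2} ∇ū·∇φ dx = 0 for all φ ∈ C_c^∞(B_{2R}(x₀)); (ii) ū = u on ∂B_{2R}(x₀); (iii) sup_{B_{2R}(x₀)} |ū| ≤ sup_{B_{2R}(x₀)} |u|; (iv) ∫_{B_{2R}(x₀)} |∇ū|^p dx ≤ ∫_{B_{2R}(x₀)} |∇u|^p dx < ∞; (v) ∫_{B_{2R}(x₀)} (|∇u|^p/p + δ F_γ(u)) dx ≤ ∫_{B_{2R}(x₀)} (|∇ū|^p/p + δ F_γ(ū)) dx. Then ∫_{B_R(x₀)}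 |V(∇u) − V(∇ū)|² dx ≤ C R^{N + pγ/(2−γ)} if 0 < γ ≤ 1, and ∫_{B_R(x₀)} |V(∇u) − V(∇ū)|² dx ≤ C R^{N + p} if 1 ≤ γ < p. -/

import Mathlib

open MeasureTheory Metric Set
open scoped InnerProductSpace

/-- The Alt–Phillips potential `F_γ(t) = λ₊ (t₊)^γ + λ₋ (t₋)^γ`. -/
noncomputable def Fgam (γ lp lm : ℝ) (t : ℝ) : ℝ :=
  lp * (max t 0) ^ γ + lm * (max (-t) 0) ^ γ

/-- `u` is a `C¹(Ω)` function with `∫_Ω ‖∇u‖^p < ∞` which is a local minimizer of the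
functional with density `‖∇v‖^p/p + F(v)`, with respect to Lipschitz competitors on
balls compactly contained in `Ω` agreeing with `u` on the boundary sphere. -/
def APLocMin (N : ℕ) (p : ℝ) (F : ℝ → ℝ) (Ω : Set (EuclideanSpace ℝ (Fin N)))
    (u : EuclideanSpace ℝ (Fin N) → ℝ) : Prop :=
  (∀ x ∈ Ω, DifferentiableAt ℝ u x) ∧
  ContinuousOn (fun x => gradient u x) Ω ∧
  IntegrableOn (fun x => ‖gradient u x‖ ^ p) Ω volume ∧
  ∀ (z : EuclideanSpace ℝ (Fin N)) (r : ℝ), 0 < r → closure (Metric.ball z r) ⊆ Ω →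
    ∀ (v : EuclideanSpace ℝ (Fin N) → ℝ) (K : NNReal),
      LipschitzOnWith K v (closure (Metric.ball z r)) →
      Set.EqOn v u (Metric.sphere z r) →
      (∫ x in Metric.ball z r, (‖gradient u x‖ ^ p / p + F (u x))) ≤
        ∫ x in Metric.ball z r, (‖gradient v x‖ ^ p / p + F (v x))

/-- The nonlinear map `V(a) = |a|^{(p-2)/2} a` (with `V(0) = 0`). -/
noncomputable def Vmap (N : ℕ) (p : ℝ) (a : EuclideanSpace ℝ (Fin N)) :
    EuclideanSpace ℝ (Fin N) :=
  ‖a‖ ^ ((p - 2) / 2) • a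

lemma Vmap_norm (N : ℕ) (p : ℝ) (hp : 1 < p) (a : EuclideanSpace ℝ (Fin N)) :
    ‖Vmap N p a‖ = ‖a‖ ^ (p / 2) := by
  unfold Vmap
  rw [norm_smul, Real.norm_of_nonneg (by positivity)]
  rcases eq_or_lt_of_le (norm_nonneg a) with h | h
  · rw [← h, Real.zero_rpow (by linarith : p / 2 ≠ 0)]; simp
  · nth_rewrite 2 [← Real.rpow_one ‖a‖]
    rw [← Real.rpow_add h]; congr 1; ring

lemma bregman (N : ℕ) (p : ℝ) (hp1 : 1 < p) (hp2 : p < 2) (a b : EuclideanSpace ℝ (Fin N)) :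
    (p - 1) / 2 * ‖Vmap N p a - Vmap N p b‖ ^ 2 ≤
      ‖a‖ ^ p - ‖b‖ ^ p - p * (‖b‖ ^ (p - 2) * ⟪b, a - b⟫_ℝ) := by
  have hsq : ∀ c : EuclideanSpace ℝ (Fin N), ‖c‖ ^ p = (‖c‖ ^ (p / 2)) ^ 2 := by
    intro c
    rw [← Real.rpow_natCast, ← Real.rpow_mul (norm_nonneg c)]; congr 1; push_cast; ring
  by_cases ha : a = 0
  · subst ha
    have h0 : Vmap N p (0 : EuclideanSpace ℝ (Fin N)) = 0 := by simp [Vmap]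
    rw [h0, zero_sub, norm_neg, Vmap_norm N p hp1, ← hsq]
    simp only [zero_sub, norm_zero, inner_neg_right, real_inner_self_eq_norm_sq]
    rw [Real.zero_rpow (by linarith)]
    have : ‖b‖ ^ (p - 2) * -‖b‖ ^ 2 = - ‖b‖ ^ p := by
      rcases eq_or_lt_of_le (norm_nonneg b) with h | h
      · rw [← h, Real.zero_rpow (by linarith : p ≠ 0)]; simp
      · rw [mul_neg, ← Real.rpow_natCast, ← Real.rpow_add h]; congr 2; push_cast; ring
    rw [this]
    have := Real.rpow_nonneg (norm_nonneg b) p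
    nlinarith
  by_cases hb : b = 0
  · subst hb
    have h0 : Vmap N p (0 : EuclideanSpace ℝ (Fin N)) = 0 := by simp [Vmap]
    rw [h0, sub_zero, Vmap_norm N p hp1, ← hsq]
    simp only [norm_zero, inner_zero_left]
    rw [Real.zero_rpow (by linarith)]
    have := Real.rpow_nonneg (norm_nonneg a) p
    nlinarith
  have hx : 0 < ‖a‖ := norm_pos_iff.mpr ha
  have hy : 0 < ‖b‖ := norm_pos_iff.mpr hb
  have hs := abs_le.mp (abs_real_inner_le_norm b a)
  rw [norm_sub_sq_real, Vmap_norm N p hp1, Vmap_norm N p hp1, hsq, hsq]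
  have hV : ⟪Vmap N p a, Vmap N p b⟫_ℝ = ‖a‖ ^ (p / 2) / ‖a‖ * (‖b‖ ^ (p / 2) / ‖b‖) * ⟪b, a⟫_ℝ := by
    unfold Vmap
    rw [inner_smul_left, inner_smul_right, real_inner_comm]
    have e : ∀ z : ℝ, 0 < z → z ^ ((p - 2) / 2) = z ^ (p / 2) / z := by
      intro z hz
      rw [show (p - 2) / 2 = p / 2 - 1 by ring, Real.rpow_sub hz, Real.rpow_one]
    rw [e _ hx, e _ hy]; simp; ring
  have hb2 : ‖b‖ ^ (p - 2) = (‖b‖ ^ (p / 2)) ^ 2 / ‖b‖ ^ 2 := by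
    rw [← hsq, Real.rpow_sub hy]; norm_cast
  have hamgm : p * (‖a‖ * (‖b‖ ^ (p / 2)) ^ 2 / ‖b‖) ≤
      (2 * p - 2) * (‖a‖ ^ (p / 2) * ‖b‖ ^ (p / 2)) + (2 - p) * (‖a‖ ^ (p / 2)) ^ 2 := by
    have := Real.geom_mean_le_arith_mean2_weighted (w₁ := (2 * p - 2) / p) (w₂ := (2 - p) / p)
      (p₁ := ‖a‖ ^ (p / 2) * ‖b‖ ^ (p / 2)) (p₂ := ‖a‖ ^ p)
      (by apply div_nonneg <;> linarith) (by apply div_nonneg <;> linarith) (by positivity)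
      (by positivity) (by field_simp; ring)
    have e : (‖a‖ ^ (p / 2) * ‖b‖ ^ (p / 2)) ^ ((2 * p - 2) / p) * (‖a‖ ^ p) ^ ((2 - p) / p)
        = ‖a‖ * (‖b‖ ^ (p / 2)) ^ 2 / ‖b‖ := by
      rw [Real.mul_rpow (by positivity) (by positivity), ← Real.rpow_mul hx.le,
        ← Real.rpow_mul hy.le, ← Real.rpow_mul hx.le, ← hsq, mul_right_comm, ← Real.rpow_add hx,
        mul_div_assoc]
      congr 1
      · rw [show p / 2 * ((2 * p - 2) / p) + p * ((2 - p) / p) = 1 by field_simp; ring, Real.rpow_one]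
      · rw [show p / 2 * ((2 * p - 2) / p) = p - 1 by field_simp, Real.rpow_sub hy, Real.rpow_one]
    rw [e, hsq] at this
    have h2 := mul_le_mul_of_nonneg_left this (by linarith : (0:ℝ) ≤ p)
    refine h2.trans (le_of_eq ?_)
    field_simp
  rw [hV, hb2, inner_sub_right, real_inner_self_eq_norm_sq]
  have hX : 0 < ‖a‖ ^ (p / 2) := by positivity
  have hY : 0 < ‖b‖ ^ (p / 2) := by positivity
  generalize ‖a‖ ^ (p / 2) = X at *
  generalize ‖b‖ ^ (p / 2) = Y at *
  clear hsq hb2 hV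
  generalize ‖a‖ = x at *
  generalize ‖b‖ = y at *
  obtain ⟨t, ht⟩ : ∃ t, ⟪b, a⟫_ℝ = t * (y * x) := ⟨⟪b, a⟫_ℝ / (y * x), by field_simp⟩
  rw [ht] at hs ⊢
  have hyx : 0 < y * x := by positivity
  have ht1 : t ≤ 1 := by nlinarith
  have ht2 : -1 ≤ t := by nlinarith
  have e1 : X / x * (Y / y) * (t * (y * x)) = t * (X * Y) := by field_simp
  have e2 : Y ^ 2 / y ^ 2 * (t * (y * x) - y ^ 2) = t * (x * Y ^ 2 / y) - Y ^ 2 := by field_simp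
  rw [e1, e2]
  have hZ : 0 < x * Y ^ 2 / y := by positivity
  generalize x * Y ^ 2 / y = Z at *
  have hXY : 0 < X * Y := by positivity
  have hp1' : 0 < p - 1 := by linarith
  rcases le_or_gt 0 t with h | h
  · have h1 := mul_le_mul_of_nonneg_left hamgm h
    have h2 : 0 ≤ (1 - t) * X ^ 2 * (2 - p) := mul_nonneg (mul_nonneg (by linarith) (sq_nonneg _)) (by linarith)
    have h3 : 0 ≤ (p - 1) * (X - Y) ^ 2 := by positivity
    have h4 : 0 ≤ (p - 1) * (1 - t) * (X * Y) := by
      apply mul_nonneg (mul_nonneg hp1'.le (by linarith)) hXY.le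
    nlinarith
  · have h1 : 0 ≤ p * (-t) * Z := by
      apply mul_nonneg (mul_nonneg (by linarith) (by linarith)) hZ.le
    have h3 : 0 ≤ (p - 1) * (X - Y) ^ 2 := by positivity
    have h4 : 0 ≤ (p - 1) * (1 + t) * (X * Y) := by
      apply mul_nonneg (mul_nonneg hp1'.le (by linarith)) hXY.le
    have h5 : 0 ≤ (2 - p) * X ^ 2 := mul_nonneg (by linarith) (sq_nonneg _)
    nlinarith

lemma Vmap_diff_aux (N : ℕ) (p : ℝ) (hp1 : 1 < p) (hp2 : p < 2) (a b : EuclideanSpace ℝ (Fin N))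
    (hab : ‖b‖ ≤ ‖a‖) :
    ‖a - b‖ ≤ 2 * ‖a‖ ^ ((2 - p) / 2) * ‖Vmap N p a - Vmap N p b‖ := by
  have hinv : ∀ c : EuclideanSpace ℝ (Fin N), c = ‖c‖ ^ ((2 - p) / 2) • Vmap N p c := by
    intro c
    by_cases hc : c = 0
    · simp [hc, Vmap]
    · have := norm_pos_iff.mpr hc
      unfold Vmap
      rw [smul_smul, ← Real.rpow_add this, show (2 - p) / 2 + (p - 2) / 2 = 0 by ring]; simp
  set A := Vmap N p a with hA
  set B := Vmap N p b with hB
  set x := ‖a‖ with hx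
  set y := ‖b‖ with hy
  have hy0 : 0 ≤ y := norm_nonneg _
  have hx0 : 0 ≤ x := norm_nonneg _
  have hθ : 0 < (2 - p) / 2 := by linarith
  have e : a - b = x ^ ((2 - p) / 2) • (A - B) + (x ^ ((2 - p) / 2) - y ^ ((2 - p) / 2)) • B := by
    conv_lhs => rw [hinv a, hinv b]
    rw [smul_sub, sub_smul]; abel
  have hmono : y ^ ((2 - p) / 2) ≤ x ^ ((2 - p) / 2) := Real.rpow_le_rpow hy0 hab hθ.le
  have hnB : ‖B‖ = y ^ (p / 2) := Vmap_norm N p hp1 b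
  have hnA : ‖A‖ = x ^ (p / 2) := Vmap_norm N p hp1 a
  have hpw : ∀ z : ℝ, 0 ≤ z → z ^ ((2 - p) / 2) * z ^ (p / 2) = z := by
    intro z hz
    rw [← Real.rpow_add_of_nonneg hz (by linarith) (by linarith)]
    rw [show (2 - p) / 2 + p / 2 = 1 by ring, Real.rpow_one]
  have key : (x ^ ((2 - p) / 2) - y ^ ((2 - p) / 2)) * ‖B‖ ≤ x ^ ((2 - p) / 2) * ‖A - B‖ := by
    have h1 := norm_sub_norm_le A B
    have h2 : x ^ ((2 - p) / 2) * (‖A‖ - ‖B‖) ≤ x ^ ((2 - p) / 2) * ‖A - B‖ :=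
      mul_le_mul_of_nonneg_left h1 (by positivity)
    refine le_trans ?_ h2
    rw [hnA, hnB, mul_sub, sub_mul, hpw x hx0, hpw y hy0]
    have := Real.geom_mean_le_arith_mean2_weighted (w₁ := (2 - p) / 2) (w₂ := p / 2)
      (p₁ := x) (p₂ := y) hθ.le (by linarith) hx0 hy0 (by ring)
    nlinarith
  rw [e]
  refine (norm_add_le _ _).trans ?_
  rw [norm_smul, norm_smul, Real.norm_of_nonneg (by positivity), Real.norm_of_nonneg (by linarith)]
  linarith

lemma Vmap_diff (N : ℕ) (p : ℝ) (hp1 : 1 < p) (hp2 : p < 2) (a b : EuclideanSpace ℝ (Fin N)) :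
    ‖a - b‖ ≤ 2 * (‖a‖ + ‖b‖) ^ ((2 - p) / 2) * ‖Vmap N p a - Vmap N p b‖ := by
  have hθ : 0 ≤ (2 - p) / 2 := by linarith
  rcases le_total ‖b‖ ‖a‖ with h | h
  · refine (Vmap_diff_aux N p hp1 hp2 a b h).trans ?_
    gcongr
    linarith [norm_nonneg b]
  · rw [norm_sub_rev, norm_sub_rev (Vmap N p a)]
    refine (Vmap_diff_aux N p hp1 hp2 b a h).trans ?_
    gcongr
    linarith [norm_nonneg a]

lemma young_pt (N : ℕ) (p : ℝ) (hp1 : 1 < p) (hp2 : p < 2) (a b : EuclideanSpace ℝ (Fin N))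
    (A R : ℝ) (hA : 0 ≤ A) (hR : 0 < R) :
    A * R * ‖a - b‖ ≤ (p - 1) / 4 * ‖Vmap N p a - Vmap N p b‖ ^ 2 +
      4 / (p - 1) * A ^ 2 * (R ^ p * (1 + R ^ p * (4 * (‖a‖ ^ p + ‖b‖ ^ p)))) := by
  have h1 := Vmap_diff N p hp1 hp2 a b
  have hg0 : 0 ≤ ‖a‖ + ‖b‖ := by positivity
  have hgp : (‖a‖ + ‖b‖) ^ p ≤ 4 * (‖a‖ ^ p + ‖b‖ ^ p) := by
    have e1 : (‖a‖ + ‖b‖) ^ p ≤ (2 * max ‖a‖ ‖b‖) ^ p := by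
      apply Real.rpow_le_rpow hg0 _ (by linarith)
      linarith [le_max_left ‖a‖ ‖b‖, le_max_right ‖a‖ ‖b‖]
    have e2 : (2:ℝ) ^ p ≤ 4 := by
      calc (2:ℝ) ^ p ≤ 2 ^ (2:ℝ) := Real.rpow_le_rpow_of_exponent_le (by norm_num) hp2.le
        _ = 4 := by norm_num
    have e3 : (max ‖a‖ ‖b‖) ^ p ≤ ‖a‖ ^ p + ‖b‖ ^ p := by
      have h1 : 0 ≤ ‖a‖ ^ p := by positivity
      have h2 : 0 ≤ ‖b‖ ^ p := by positivity
      rcases max_cases ‖a‖ ‖b‖ with h | h <;> rw [h.1] <;> linarith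
    rw [Real.mul_rpow (by norm_num) (by positivity)] at e1
    refine e1.trans ?_
    apply mul_le_mul e2 e3 (by positivity) (by norm_num)
  have hg : R ^ 2 * ((‖a‖ + ‖b‖) ^ ((2 - p) / 2)) ^ 2 ≤
      R ^ p * (1 + R ^ p * (4 * (‖a‖ ^ p + ‖b‖ ^ p))) := by
    have e1 : ((‖a‖ + ‖b‖) ^ ((2 - p) / 2)) ^ 2 = (‖a‖ + ‖b‖) ^ (2 - p) := by
      rw [← Real.rpow_natCast, ← Real.rpow_mul hg0]; congr 1; push_cast; ring
    have e2 : R ^ 2 = R ^ p * R ^ (2 - p) := by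
      rw [← Real.rpow_add hR, ← Real.rpow_natCast]; congr 1; push_cast; ring
    rw [e1, e2, mul_assoc, ← Real.mul_rpow hR.le hg0]
    refine mul_le_mul_of_nonneg_left ?_ (by positivity)
    have e3 : (R * (‖a‖ + ‖b‖)) ^ (2 - p) ≤ 1 + (R * (‖a‖ + ‖b‖)) ^ p := by
      have hz : 0 ≤ R * (‖a‖ + ‖b‖) := by positivity
      rcases le_total (R * (‖a‖ + ‖b‖)) 1 with h | h
      · have := Real.rpow_le_one hz h (by linarith : 0 ≤ 2 - p)
        have := Real.rpow_nonneg hz p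
        linarith
      · have := Real.rpow_le_rpow_of_exponent_le h (by linarith : 2 - p ≤ p)
        linarith
    refine e3.trans ?_
    rw [Real.mul_rpow hR.le hg0]
    gcongr
  have hp0 : 0 < p - 1 := by linarith
  set G := (‖a‖ + ‖b‖) ^ ((2 - p) / 2)
  set D := ‖Vmap N p a - Vmap N p b‖
  have hAR : 0 ≤ A * R := by positivity
  have h2 : A * R * ‖a - b‖ ≤ A * R * (2 * G * D) := mul_le_mul_of_nonneg_left h1 hAR
  have h3 : 4 / (p - 1) * A ^ 2 * (R ^ 2 * G ^ 2) ≤ 4 / (p - 1) * A ^ 2 * (R ^ p * (1 + R ^ p * (4 * (‖a‖ ^ p + ‖b‖ ^ p)))) :=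
    mul_le_mul_of_nonneg_left hg (by positivity)
  have h4 : A * R * (2 * G * D) ≤ (p - 1) / 4 * D ^ 2 + 4 / (p - 1) * A ^ 2 * (R ^ 2 * G ^ 2) := by
    have : (p - 1) / 4 * D ^ 2 + 4 / (p - 1) * A ^ 2 * (R ^ 2 * G ^ 2) - A * R * (2 * G * D)
      = (p - 1) / 4 * (D - 4 / (p - 1) * (A * R * G)) ^ 2 := by
      field_simp; ring
    have h5 : 0 ≤ (p - 1) / 4 * (D - 4 / (p - 1) * (A * R * G)) ^ 2 := by positivity
    linarith
  linarith

lemma rpow_diff_le (γ M : ℝ) (hγ0 : 0 < γ) (hM : 0 < M) : ∃ K : ℝ, 0 < K ∧ ∀ x y : ℝ, 0 ≤ x → 0 ≤ y → x ≤ M →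
    y ≤ M → |x ^ γ - y ^ γ| ≤ K * |x - y| ^ (min γ 1) := by
  rcases le_total γ 1 with h | h
  · refine ⟨1, one_pos, ?_⟩
    rw [min_eq_left h]
    have aux : ∀ x y : ℝ, 0 ≤ x → 0 ≤ y → y ≤ x → |x ^ γ - y ^ γ| ≤ 1 * |x - y| ^ γ := by
      intro x y hx hy hxy
      have := Real.rpow_add_le_add_rpow (sub_nonneg.mpr hxy) hy hγ0.le h
      rw [sub_add_cancel] at this
      rw [abs_of_nonneg (sub_nonneg.mpr (Real.rpow_le_rpow hy hxy hγ0.le)),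
        abs_of_nonneg (sub_nonneg.mpr hxy)]
      linarith
    intro x y hx hy _ _
    rcases le_total y x with hh | hh
    · exact aux x y hx hy hh
    · rw [abs_sub_comm, abs_sub_comm x]; exact aux y x hy hx hh
  · refine ⟨γ * M ^ (γ - 1), by positivity, ?_⟩
    rw [min_eq_right h]
    intro x y hx hy hxM hyM
    have := Convex.norm_image_sub_le_of_norm_hasDerivWithin_le (f := fun x : ℝ => x ^ γ)
      (f' := fun x => γ * x ^ (γ - 1)) (s := Icc 0 M) (C := γ * M ^ (γ - 1)) (x := y) (y := x)
      (fun z hz => (Real.hasDerivAt_rpow_const (Or.inr h)).hasDerivWithinAt)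
      (fun z hz => by
        rw [Real.norm_of_nonneg (mul_nonneg hγ0.le (Real.rpow_nonneg hz.1 _))]
        exact mul_le_mul_of_nonneg_left (Real.rpow_le_rpow hz.1 hz.2 (by linarith)) hγ0.le)
      (convex_Icc 0 M) ⟨hy, hyM⟩ ⟨hx, hxM⟩
    simpa using this

lemma Fgam_diff (γ lp lm M : ℝ) (hγ0 : 0 < γ) (hM : 0 < M) (hlp : 0 < lp) (hlm : 0 < lm) :
    ∃ K : ℝ, 0 < K ∧ ∀ x y : ℝ, |x| ≤ M → |y| ≤ M →
      Fgam γ lp lm x - Fgam γ lp lm y ≤ K * |x - y| ^ (min γ 1) := by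
  obtain ⟨K, hK, h⟩ := rpow_diff_le γ M hγ0 hM
  refine ⟨(lp + lm) * K, by positivity, ?_⟩
  intro x y hx hy
  rw [abs_le] at hx hy
  have h1 := h (max x 0) (max y 0) (le_max_right _ _) (le_max_right _ _) (max_le hx.2 hM.le) (max_le hy.2 hM.le)
  have h2 := h (max (-x) 0) (max (-y) 0) (le_max_right _ _) (le_max_right _ _)
    (max_le (by linarith) hM.le) (max_le (by linarith) hM.le)
  have hm : 0 ≤ min γ 1 := by positivity
  have h3 : |max x 0 - max y 0| ^ (min γ 1) ≤ |x - y| ^ (min γ 1) :=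
    Real.rpow_le_rpow (abs_nonneg _) (abs_max_sub_max_le_abs x y 0) hm
  have h4 : |max (-x) 0 - max (-y) 0| ^ (min γ 1) ≤ |x - y| ^ (min γ 1) := by
    refine Real.rpow_le_rpow (abs_nonneg _) ((abs_max_sub_max_le_abs (-x) (-y) 0).trans (le_of_eq ?_)) hm
    rw [abs_sub_comm]; congr 1; ring
  have h5 := (le_abs_self _).trans (h1.trans (mul_le_mul_of_nonneg_left h3 hK.le))
  have h6 := (le_abs_self _).trans (h2.trans (mul_le_mul_of_nonneg_left h4 hK.le))
  have h7 := mul_le_mul_of_nonneg_left h5 hlp.le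
  have h8 := mul_le_mul_of_nonneg_left h6 hlm.le
  unfold Fgam
  linarith

lemma Fgam_nonneg (γ lp lm : ℝ) (hlp : 0 < lp) (hlm : 0 < lm) (t : ℝ) : 0 ≤ Fgam γ lp lm t := by
  unfold Fgam
  have := Real.rpow_nonneg (le_max_right t 0) γ
  have := Real.rpow_nonneg (le_max_right (-t) 0) γ
  positivity

lemma Fgam_cont (γ lp lm : ℝ) (hγ0 : 0 < γ) : Continuous (Fgam γ lp lm) := by
  unfold Fgam
  have h1 : Continuous fun t : ℝ => (max t 0) ^ γ :=
    Continuous.rpow_const (by fun_prop) (fun _ => Or.inr hγ0.le)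
  have h2 : Continuous fun t : ℝ => (max (-t) 0) ^ γ :=
    Continuous.rpow_const (by fun_prop) (fun _ => Or.inr hγ0.le)
  fun_prop

lemma Fgam_mono (γ lp lm : ℝ) (hγ0 : 0 < γ) (hlp : 0 < lp) (hlm : 0 < lm) (c t : ℝ) (hc0 : 0 ≤ c) (hc1 : c ≤ 1) :
    Fgam γ lp lm (c * t) ≤ Fgam γ lp lm t := by
  unfold Fgam
  have h : ∀ s : ℝ, max (c * s) 0 ≤ max s 0 := by
    intro s
    apply max_le _ (le_max_right _ _)
    rcases le_total 0 s with h | h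
    · exact (by nlinarith : c * s ≤ s).trans (le_max_left _ _)
    · exact (mul_nonpos_of_nonneg_of_nonpos hc0 h).trans (le_max_right _ _)
  have h1 := h t
  have h2 := h (-t)
  rw [← neg_mul_eq_mul_neg] at *
  gcongr

lemma C1_approx (N : ℕ) (U : Set (EuclideanSpace ℝ (Fin N))) (hU : IsOpen U)
    (φ : EuclideanSpace ℝ (Fin N) → ℝ) (hφ : ContDiff ℝ 1 φ) (hc : HasCompactSupport φ)
    (hs : tsupport φ ⊆ U) (η : ℝ) (hη : 0 < η) :
    ∃ g : EuclideanSpace ℝ (Fin N) → ℝ, ContDiff ℝ (⊤ : ℕ∞) g ∧ HasCompactSupport g ∧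
      tsupport g ⊆ U ∧ ∀ x, ‖fderiv ℝ φ x - fderiv ℝ g x‖ ≤ η := by
  have hK : IsCompact (tsupport φ) := hc
  obtain ⟨d, hd, hdU⟩ := hK.exists_cthickening_subset_open hU hs
  have hfc : Continuous (fderiv ℝ φ) := hφ.continuous_fderiv one_ne_zero
  have huc : UniformContinuous (fderiv ℝ φ) :=
    hfc.uniformContinuous_of_tendsto_cocompact (hc.fderiv ℝ).is_zero_at_infty
  obtain ⟨d2, hd2, huc⟩ := Metric.uniformContinuous_iff.mp huc η hη
  set ε := min d d2 with hε
  have hεpos : 0 < ε := lt_min hd hd2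
  let b : ContDiffBump (0 : EuclideanSpace ℝ (Fin N)) := ⟨ε / 2, ε, half_pos hεpos, half_lt_self hεpos⟩
  have hbr : b.rOut = ε := rfl
  have hbl : LocallyIntegrable (b.normed volume) volume :=
    b.continuous_normed.locallyIntegrable
  set g := convolution (b.normed volume) φ (ContinuousLinearMap.lsmul ℝ ℝ) volume with hg
  have hts : tsupport g ⊆ cthickening d (tsupport φ) := by
    apply closure_minimal _ isClosed_cthickening
    intro x hx
    by_contra hxn
    apply hx
    have hz : ∀ y ∈ ball x b.rOut, φ y = 0 := by
      intro y hy
      by_contra hne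
      apply hxn
      apply mem_cthickening_of_dist_le x y _ _ (subset_tsupport φ hne)
      rw [dist_comm]
      rw [mem_ball, hbr] at hy
      exact (le_of_lt hy).trans (min_le_left _ _)
    have hzx : φ x = 0 := hz x (mem_ball_self b.rOut_pos)
    have := b.dist_normed_convolution_le (μ := volume) (g := φ) (x₀ := x) (ε := 0)
      hφ.continuous.aestronglyMeasurable (fun y hy => by rw [hz y hy, hzx]; simp)
    rw [hzx] at this
    exact dist_le_zero.mp this
  refine ⟨g, ?_, ?_, hts.trans hdU, ?_⟩
  · exact b.hasCompactSupport_normed.contDiff_convolution_left _ b.contDiff_normed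
      hφ.continuous.locallyIntegrable
  · exact hK.cthickening.of_isClosed_subset (isClosed_tsupport _) hts
  · intro x
    have h1 := hc.hasFDerivAt_convolution_right (ContinuousLinearMap.lsmul ℝ ℝ) hbl hφ x
    have h2 : fderiv ℝ g x = _ := h1.fderiv
    refine ContinuousLinearMap.opNorm_le_bound _ hη.le ?_
    intro v
    rw [sub_apply, h2, convolution_precompR_apply _ hbl (hc.fderiv ℝ) hfc,
      norm_sub_rev, ← dist_eq_norm]
    refine b.dist_normed_convolution_le (μ := volume) (g := fun a => fderiv ℝ φ a v) (x₀ := x)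
      (hfc.clm_apply continuous_const).aestronglyMeasurable ?_
    intro y hy
    rw [mem_ball, hbr] at hy
    have h3 := huc (hy.trans_le (min_le_right _ _))
    rw [dist_eq_norm] at h3 ⊢
    rw [← sub_apply]
    exact (ContinuousLinearMap.le_opNorm _ _).trans (mul_le_mul_of_nonneg_right h3.le (norm_nonneg _))

lemma test_C1 (N : ℕ) (B : Set (EuclideanSpace ℝ (Fin N))) (hB : IsOpen B)
    (W : EuclideanSpace ℝ (Fin N) → EuclideanSpace ℝ (Fin N)) (hW : IntegrableOn W B volume)
    (h : ∀ φ : EuclideanSpace ℝ (Fin N) → ℝ, ContDiff ℝ (⊤ : ℕ∞) φ → HasCompactSupport φ →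
          tsupport φ ⊆ B → ∫ x in B, fderiv ℝ φ x (W x) = 0)
    (φ : EuclideanSpace ℝ (Fin N) → ℝ) (hφ : ContDiff ℝ 1 φ) (hc : HasCompactSupport φ)
    (hs : tsupport φ ⊆ B) : ∫ x in B, fderiv ℝ φ x (W x) = 0 := by
  have hint : ∀ ψ : EuclideanSpace ℝ (Fin N) → ℝ, ContDiff ℝ 1 ψ → HasCompactSupport ψ →
      IntegrableOn (fun x => fderiv ℝ ψ x (W x)) B volume := by
    intro ψ hψ hψc
    have hcont := hψ.continuous_fderiv one_ne_zero
    obtain ⟨C, hC⟩ := (hψc.fderiv ℝ).exists_bound_of_continuous hcont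
    refine Integrable.mono' (hW.norm.const_mul C) ?_ ?_
    · exact (ContinuousLinearMap.apply ℝ ℝ : EuclideanSpace ℝ (Fin N) →L[ℝ] _).aestronglyMeasurable_comp₂
        hW.aestronglyMeasurable hcont.aestronglyMeasurable
    · filter_upwards with x
      exact (ContinuousLinearMap.le_opNorm _ _).trans (mul_le_mul_of_nonneg_right (hC x) (norm_nonneg _))
  have hb : ∀ η : ℝ, 0 < η → ‖∫ x in B, fderiv ℝ φ x (W x)‖ ≤ η * ∫ x in B, ‖W x‖ := by
    intro η hη
    obtain ⟨g, hg1, hg2, hg3, hg4⟩ := C1_approx N B hB φ hφ hc hs η hη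
    have hg1' : ContDiff ℝ 1 g := hg1.of_le (by exact_mod_cast le_top)
    have e : ∫ x in B, fderiv ℝ φ x (W x) = ∫ x in B, (fderiv ℝ φ x (W x) - fderiv ℝ g x (W x)) := by
      rw [integral_sub (hint φ hφ hc) (hint g hg1' hg2), h g hg1 hg2 hg3, sub_zero]
    rw [e, ← integral_const_mul]
    apply norm_integral_le_of_norm_le (hW.norm.const_mul η)
    filter_upwards with x
    rw [← sub_apply]
    exact (ContinuousLinearMap.le_opNorm _ _).trans (mul_le_mul_of_nonneg_right (hg4 x) (norm_nonneg _))
  rw [← norm_le_zero_iff]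
  have hI : 0 ≤ ∫ x in B, ‖W x‖ := integral_nonneg fun _ => norm_nonneg _
  refine le_of_forall_pos_le_add fun ε hε => ?_
  have := hb (ε / ((∫ x in B, ‖W x‖) + 1)) (by positivity)
  refine this.trans ?_
  rw [zero_add, div_mul_eq_mul_div, div_le_iff₀ (by positivity)]
  nlinarith

lemma exists_P : ∃ (P : ℝ → ℝ) (K : ℝ), 0 < K ∧ ContDiff ℝ 1 P ∧ (∀ t, t ≤ 1 → P t = 0) ∧
    (∀ t, 2 ≤ t → P t = t) ∧ (∀ t, 0 ≤ P t) ∧ (∀ t, |deriv P t| ≤ K) ∧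
    (∀ t, 2 < t → deriv P t = 1) ∧ (∀ t, t < 1 → deriv P t = 0) := by
  let P : ℝ → ℝ := fun t => t * Real.smoothTransition (t - 1)
  have hP : ContDiff ℝ 1 P := contDiff_id.mul (Real.smoothTransition.contDiff.comp (contDiff_id.sub contDiff_const))
  have h0 : ∀ t, t ≤ 1 → P t = 0 := by
    intro t ht
    simp [P, Real.smoothTransition.zero_of_nonpos (by linarith : t - 1 ≤ 0)]
  have h2 : ∀ t, 2 ≤ t → P t = t := by
    intro t ht
    simp [P, Real.smoothTransition.one_of_one_le (by linarith : 1 ≤ t - 1)]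
  have d0 : ∀ t, t < 1 → deriv P t = 0 := by
    intro t ht
    have : P =ᶠ[nhds t] fun _ => 0 := by
      filter_upwards [Iio_mem_nhds ht] with s hs using h0 s (le_of_lt hs)
    rw [this.deriv_eq]; simp
  have d2 : ∀ t, 2 < t → deriv P t = 1 := by
    intro t ht
    have : P =ᶠ[nhds t] fun s => s := by
      filter_upwards [Ioi_mem_nhds ht] with s hs using h2 s (le_of_lt hs)
    rw [this.deriv_eq]; simp
  have hcd : Continuous (deriv P) := hP.continuous_deriv le_rfl
  obtain ⟨C, hC⟩ := (isCompact_Icc (a := (1:ℝ)) (b := 2)).exists_bound_of_continuousOn hcd.continuousOn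
  refine ⟨P, |C| + 1, by positivity, hP, h0, h2, ?_, ?_, d2, d0⟩
  · intro t
    rcases le_total t 1 with h | h
    · rw [h0 t h]
    · exact mul_nonneg (by linarith) (Real.smoothTransition.nonneg _)
  · intro t
    rcases lt_or_ge t 1 with h | h
    · rw [d0 t h]; simp; positivity
    rcases lt_or_ge 2 t with h' | h'
    · rw [d2 t h']; simp
    · have := hC t ⟨h, h'⟩
      rw [Real.norm_eq_abs] at this
      linarith [le_abs_self C]

lemma trunc_comp (N : ℕ) (x₀ : EuclideanSpace ℝ (Fin N)) (r : ℝ) (h : EuclideanSpace ℝ (Fin N) → ℝ)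
    (hd : ContDiffOn ℝ 1 h (ball x₀ r)) (hc : ContinuousOn h (closedBall x₀ r))
    (h0 : ∀ x ∈ sphere x₀ r, h x = 0) (S : ℝ → ℝ) (hS : ContDiff ℝ 1 S) (ε : ℝ) (hε : 0 < ε)
    (hS0 : ∀ t, |t| ≤ ε → S t = 0) :
    ∃ φ : EuclideanSpace ℝ (Fin N) → ℝ, ContDiff ℝ 1 φ ∧ HasCompactSupport φ ∧
      tsupport φ ⊆ ball x₀ r ∧ (∀ x ∈ ball x₀ r, φ x = S (h x)) ∧
      (∀ x ∈ ball x₀ r, fderiv ℝ φ x = deriv S (h x) • fderiv ℝ h x) := by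
  classical
  let φ := (ball x₀ r).indicator (fun x => S (h x))
  let K := closedBall x₀ r ∩ {x | ε ≤ |h x|}
  have hKc : IsClosed K := by
    have := hc.abs.preimage_isClosed_of_isClosed isClosed_closedBall (isClosed_Ici (a := ε))
    exact this
  have hKB : K ⊆ ball x₀ r := by
    intro x hx
    rcases lt_or_eq_of_le (mem_closedBall.mp hx.1) with hlt | heq
    · exact hlt
    · have := h0 x heq
      have h2 : ε ≤ |h x| := hx.2
      rw [this, abs_zero] at h2
      linarith
  have hsup : tsupport φ ⊆ K := by
    apply closure_minimal _ hKc
    intro x hx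
    have hxB : x ∈ ball x₀ r := by
      by_contra hn
      exact hx (indicator_of_notMem hn _)
    refine ⟨ball_subset_closedBall hxB, ?_⟩
    by_contra hn
    apply hx
    show (ball x₀ r).indicator (fun x => S (h x)) x = 0
    rw [indicator_of_mem hxB]
    exact hS0 _ (le_of_lt (not_le.mp hn))
  have hev : ∀ x ∈ ball x₀ r, φ =ᶠ[nhds x] fun y => S (h y) := by
    intro x hx
    filter_upwards [isOpen_ball.mem_nhds hx] with y hy
    exact indicator_of_mem hy _
  refine ⟨φ, ?_, ?_, hsup.trans hKB, fun x hx => indicator_of_mem hx _, ?_⟩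
  · rw [contDiff_iff_contDiffAt]
    intro x
    by_cases hx : x ∈ ball x₀ r
    · refine ContDiffAt.congr_of_eventuallyEq ?_ (hev x hx)
      exact hS.contDiffAt.comp x (hd.contDiffAt (isOpen_ball.mem_nhds hx))
    · have : x ∉ tsupport φ := fun hh => hx (hKB (hsup hh))
      have h2 := notMem_tsupport_iff_eventuallyEq.mp this
      exact contDiffAt_const.congr_of_eventuallyEq h2
  · exact (isCompact_closedBall x₀ r).of_isClosed_subset (isClosed_tsupport _)
      (hsup.trans inter_subset_left)
  · intro x hx
    rw [(hev x hx).fderiv_eq]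
    have h1 : DifferentiableAt ℝ h x :=
      (hd.contDiffAt (isOpen_ball.mem_nhds hx)).differentiableAt one_ne_zero
    have h2 : HasDerivAt S (deriv S (h x)) (h x) := (hS.differentiable one_ne_zero _).hasDerivAt
    exact (h2.comp_hasFDerivAt x h1.hasFDerivAt).fderiv

lemma poincare_C1c (N : ℕ) (hN : 1 ≤ N) (x₀ : EuclideanSpace ℝ (Fin N)) (r : ℝ)
    (φ : EuclideanSpace ℝ (Fin N) → ℝ) (hφ : ContDiff ℝ 1 φ) (hc : HasCompactSupport φ)
    (hs : tsupport φ ⊆ ball x₀ r) : ∫ x in ball x₀ r, φ x ≤ r * ∫ x in ball x₀ r, ‖fderiv ℝ φ x‖ := by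
  let e : EuclideanSpace ℝ (Fin N) := EuclideanSpace.single ⟨0, hN⟩ 1
  have he : ‖e‖ = 1 := by simp [e]
  let L : EuclideanSpace ℝ (Fin N) →L[ℝ] ℝ := innerSL ℝ e
  let g : EuclideanSpace ℝ (Fin N) → ℝ := fun x => L (x - x₀)
  have hgd : ∀ x, HasFDerivAt g L x := fun x => by
    have := L.hasFDerivAt.comp x ((hasFDerivAt_id x).sub_const x₀)
    rw [ContinuousLinearMap.comp_id] at this
    exact this
  have hge : ∀ x, fderiv ℝ g x e = 1 := fun x => by
    rw [(hgd x).fderiv]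
    simp [L, he]
  have hgc : Continuous g := by fun_prop
  have hfc : Continuous (fderiv ℝ φ) := hφ.continuous_fderiv one_ne_zero
  have hfe : Continuous (fun x => fderiv ℝ φ x e) := hfc.clm_apply continuous_const
  have hce : HasCompactSupport (fun x => fderiv ℝ φ x e) :=
    (hc.fderiv ℝ).comp_left (g := fun A : EuclideanSpace ℝ (Fin N) →L[ℝ] ℝ => A e) (by simp)
  have hint := integral_mul_fderiv_eq_neg_fderiv_mul_of_integrable (μ := volume) (f := φ) (g := g) (v := e)
    ((hfe.mul hgc).integrable_of_hasCompactSupport hce.mul_right)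
    (by simp_rw [hge, mul_one]; exact hφ.continuous.integrable_of_hasCompactSupport hc)
    ((hφ.continuous.mul hgc).integrable_of_hasCompactSupport hc.mul_right)
    (fun x _ => hφ.differentiable one_ne_zero x) (fun x _ => (hgd x).differentiableAt)
  simp_rw [hge, mul_one] at hint
  have hz : ∀ x, x ∉ ball x₀ r → φ x = 0 := fun x hx => image_eq_zero_of_notMem_tsupport fun hh => hx (hs hh)
  have hz2 : ∀ x, x ∉ ball x₀ r → fderiv ℝ φ x e * g x = 0 := fun x hx => by
    have : fderiv ℝ φ x = 0 :=
      image_eq_zero_of_notMem_tsupport fun hh => hx (hs (tsupport_fderiv_subset ℝ hh))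
    rw [this]; simp
  rw [setIntegral_eq_integral_of_forall_compl_eq_zero hz, hint,
    ← setIntegral_eq_integral_of_forall_compl_eq_zero hz2, ← integral_neg, ← integral_const_mul]
  refine integral_mono_ae ?_ ?_ ?_
  · exact ((hfe.mul hgc).integrable_of_hasCompactSupport hce.mul_right).neg.integrableOn
  · exact ((hfc.norm.integrable_of_hasCompactSupport (hc.fderiv ℝ).norm).const_mul r).integrableOn
  · filter_upwards [ae_restrict_mem measurableSet_ball] with x hx
    have h1 : |fderiv ℝ φ x e| ≤ ‖fderiv ℝ φ x‖ := by
      have := (fderiv ℝ φ x).le_opNorm e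
      rwa [he, mul_one] at this
    have h2 : |g x| ≤ r := by
      have := abs_real_inner_le_norm e (x - x₀)
      rw [he, one_mul] at this
      rw [mem_ball, dist_eq_norm] at hx
      exact this.trans hx.le
    have h3 : -(fderiv ℝ φ x e * g x) ≤ |fderiv ℝ φ x e| * |g x| := by
      rw [← abs_mul]; exact neg_le_abs _
    refine h3.trans ?_
    rw [mul_comm]
    exact mul_le_mul h2 h1 (abs_nonneg _) ((abs_nonneg _).trans h2)

lemma null_level (N : ℕ) (hN : 1 ≤ N) (x₀ : EuclideanSpace ℝ (Fin N)) (r : ℝ)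
    (h : EuclideanSpace ℝ (Fin N) → ℝ) (hd : ContDiffOn ℝ 1 h (ball x₀ r)) :
    ∀ᵐ x ∂(volume.restrict (ball x₀ r)), h x = 0 → fderiv ℝ h x = 0 := by
  classical
  let e : EuclideanSpace ℝ (Fin N) := EuclideanSpace.single ⟨0, hN⟩ 1
  have he : ‖e‖ = 1 := by simp [e]
  let Z := ball x₀ r ∩ h ⁻¹' {0}
  have hZm : MeasurableSet Z := by
    have := hd.continuousOn.measurable_piecewise (g := fun _ => (1:ℝ)) continuousOn_const measurableSet_ball
    have h2 : Z = ((ball x₀ r).piecewise h (fun _ => (1:ℝ))) ⁻¹' {0} := by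
      ext x
      by_cases hx : x ∈ ball x₀ r
      · simp only [Z, mem_inter_iff, hx, true_and, mem_preimage, piecewise_eq_of_mem _ _ _ hx]
      · simp only [Z, mem_inter_iff, hx, false_and, mem_preimage, piecewise_eq_of_notMem _ _ _ hx]
        simp
    rw [h2]
    exact this (measurableSet_singleton _)
  have happ : ApproximatesLinearOn (fun x => h x • e) (0 : EuclideanSpace ℝ (Fin N) →L[ℝ] EuclideanSpace ℝ (Fin N)) Z 0 := by
    intro x hx y hy
    have h1 : h x = 0 := hx.2
    have h2 : h y = 0 := hy.2
    simp [h1, h2]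
  have hae := happ.norm_fderiv_sub_le (μ := volume) hZm (fun x => (fderiv ℝ h x).smulRight e) (by
    intro x hx
    have h1 : DifferentiableAt ℝ h x :=
      (hd.contDiffAt (isOpen_ball.mem_nhds hx.1)).differentiableAt one_ne_zero
    exact (h1.hasFDerivAt.smul_const e).hasFDerivWithinAt)
  rw [ae_restrict_iff' hZm] at hae
  rw [ae_restrict_iff' measurableSet_ball]
  filter_upwards [hae] with x hx hxB hx0
  have := hx ⟨hxB, hx0⟩
  have hene : e ≠ 0 := by intro hh; rw [hh] at he; simp at he
  have h2 : fderiv ℝ h x = 0 ∨ e = 0 := by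
    simpa using this
  exact h2.resolve_right hene

lemma exists_ST : ∃ K : ℝ, 0 < K ∧ ∀ ε : ℝ, 0 < ε → ∃ S T : ℝ → ℝ, ContDiff ℝ 1 S ∧ ContDiff ℝ 1 T ∧
    (∀ t, |t| ≤ ε → S t = 0) ∧ (∀ t, |t| ≤ ε → T t = 0) ∧ (∀ t, |deriv S t| ≤ K) ∧
    (∀ t, |deriv T t| ≤ K) ∧ (∀ t, |t| - 2 * ε ≤ S t) ∧ (∀ t, 2 * ε < |t| → deriv T t = 1) := by
  obtain ⟨P, K, hK, hP, h0, h2, hnn, hd, hd2, hd0⟩ := exists_P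
  refine ⟨2 * K, by positivity, fun ε hε => ?_⟩
  have hP1 : ∀ t, HasDerivAt (fun t => ε * P (t / ε)) (deriv P (t / ε)) t := by
    intro t
    have h1 : HasDerivAt P (deriv P (t / ε)) (t / ε) := (hP.differentiable one_ne_zero _).hasDerivAt
    have h2 : HasDerivAt (fun t => t / ε) (1 / ε) t := (hasDerivAt_id t).div_const ε
    have h3 := (h1.comp t h2).const_mul ε
    refine h3.congr_deriv ?_
    field_simp
  have hP2 : ∀ t, HasDerivAt (fun t => ε * P (-t / ε)) (- deriv P (-t / ε)) t := by
    intro t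
    have h1 : HasDerivAt P (deriv P (-t / ε)) (-t / ε) := (hP.differentiable one_ne_zero _).hasDerivAt
    have h2 : HasDerivAt (fun t => -t / ε) (-1 / ε) t := (hasDerivAt_id t).neg.div_const ε
    have h3 := (h1.comp t h2).const_mul ε
    refine h3.congr_deriv ?_
    field_simp
  have hc1 : ContDiff ℝ 1 (fun t => ε * P (t / ε)) :=
    contDiff_const.mul (hP.comp (contDiff_id.div_const ε))
  have hc2 : ContDiff ℝ 1 (fun t => ε * P (-t / ε)) :=
    contDiff_const.mul (hP.comp (contDiff_id.neg.div_const ε))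
  have hz : ∀ t, |t| ≤ ε → P (t / ε) = 0 ∧ P (-t / ε) = 0 := by
    intro t ht
    rw [abs_le] at ht
    constructor <;> apply h0 <;> rw [div_le_one hε] <;> linarith
  refine ⟨fun t => ε * P (t / ε) + ε * P (-t / ε), fun t => ε * P (t / ε) - ε * P (-t / ε),
    hc1.add hc2, hc1.sub hc2, ?_, ?_, ?_, ?_, ?_, ?_⟩
  · intro t ht; simp [hz t ht]
  · intro t ht; simp [hz t ht]
  · intro t
    have : deriv (fun t => ε * P (t / ε) + ε * P (-t / ε)) t = _ := ((hP1 t).add (hP2 t)).deriv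
    rw [this, abs_le]
    have h1 := abs_le.mp (hd (t / ε))
    have h2 := abs_le.mp (hd (-t / ε))
    constructor <;> linarith
  · intro t
    have : deriv (fun t => ε * P (t / ε) - ε * P (-t / ε)) t = _ := ((hP1 t).sub (hP2 t)).deriv
    rw [this, abs_le]
    have h1 := abs_le.mp (hd (t / ε))
    have h2 := abs_le.mp (hd (-t / ε))
    constructor <;> linarith
  · intro t
    have n1 := mul_nonneg hε.le (hnn (t / ε))
    have n2 := mul_nonneg hε.le (hnn (-t / ε))
    show |t| - 2 * ε ≤ ε * P (t / ε) + ε * P (-t / ε)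
    rcases le_total |t| (2 * ε) with h | h
    · linarith
    · rcases abs_cases t with ht | ht
      · have : P (t / ε) = t / ε := h2 _ (by rw [le_div_iff₀ hε]; linarith)
        have e : ε * P (t / ε) = t := by rw [this]; field_simp
        linarith
      · have : P (-t / ε) = -t / ε := h2 _ (by rw [le_div_iff₀ hε]; linarith)
        have e : ε * P (-t / ε) = -t := by rw [this]; field_simp
        linarith
  · intro t ht
    have : deriv (fun t => ε * P (t / ε) - ε * P (-t / ε)) t = _ := ((hP1 t).sub (hP2 t)).deriv
    rw [this]
    rcases abs_cases t with h | h
    · rw [hd2 (t / ε) (by rw [lt_div_iff₀ hε]; linarith), hd0 (-t / ε) (by rw [div_lt_one hε]; linarith)]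
      simp
    · rw [hd2 (-t / ε) (by rw [lt_div_iff₀ hε]; linarith), hd0 (t / ε) (by rw [div_lt_one hε]; linarith)]
      simp

lemma poincare_L1 : ∃ K : ℝ, 0 < K ∧ ∀ (N : ℕ) (_ : 1 ≤ N) (x₀ : EuclideanSpace ℝ (Fin N)) (r : ℝ)
    (_ : 0 < r) (h : EuclideanSpace ℝ (Fin N) → ℝ)
    (_ : ContDiffOn ℝ 1 h (ball x₀ r)) (_ : ContinuousOn h (closedBall x₀ r))
    (_ : ∀ x ∈ sphere x₀ r, h x = 0) (_ : IntegrableOn (fun x => ‖fderiv ℝ h x‖) (ball x₀ r) volume),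
    ∫ x in ball x₀ r, |h x| ≤ K * r * ∫ x in ball x₀ r, ‖fderiv ℝ h x‖ := by
  obtain ⟨K, hK, hST⟩ := exists_ST
  refine ⟨K, hK, ?_⟩
  intro N hN x₀ r hr h hd hc h0 hi
  have hhi : IntegrableOn (fun x => |h x|) (ball x₀ r) volume :=
    (hc.abs.integrableOn_compact (isCompact_closedBall x₀ r)).mono_set ball_subset_closedBall
  have key : ∀ ε : ℝ, 0 < ε → ∫ x in ball x₀ r, |h x| ≤
      K * r * (∫ x in ball x₀ r, ‖fderiv ℝ h x‖) + 2 * volume.real (ball x₀ r) * ε := by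
    intro ε hε
    obtain ⟨S, T, hS, -, hS0, -, hSd, -, hSa, -⟩ := hST ε hε
    obtain ⟨φ, hφ, hφc, hφs, hφv, hφd⟩ := trunc_comp N x₀ r h hd hc h0 S hS ε hε hS0
    have h1 := poincare_C1c N hN x₀ r φ hφ hφc hφs
    have h2 : ∫ x in ball x₀ r, (|h x| - 2 * ε) ≤ ∫ x in ball x₀ r, φ x := by
      refine setIntegral_mono_on ?_ ?_ measurableSet_ball ?_
      · exact hhi.sub (integrableOn_const measure_ball_lt_top.ne)
      · exact (hφ.continuous.integrable_of_hasCompactSupport hφc).integrableOn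
      · intro x hx
        rw [hφv x hx]; exact hSa _
    rw [integral_sub hhi (integrableOn_const measure_ball_lt_top.ne), setIntegral_const, smul_eq_mul] at h2
    have h3 : ∫ x in ball x₀ r, ‖fderiv ℝ φ x‖ ≤ ∫ x in ball x₀ r, K * ‖fderiv ℝ h x‖ := by
      refine setIntegral_mono_on ?_ (hi.const_mul K) measurableSet_ball ?_
      · exact ((hφ.continuous_fderiv one_ne_zero).norm.integrable_of_hasCompactSupport
          (hφc.fderiv ℝ).norm).integrableOn
      · intro x hx
        rw [hφd x hx, norm_smul]
        exact mul_le_mul_of_nonneg_right (hSd _) (norm_nonneg _)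
    rw [integral_const_mul] at h3
    have h4 := mul_le_mul_of_nonneg_left h3 hr.le
    nlinarith
  refine le_of_forall_pos_le_add fun η hη => ?_
  have hv : 0 ≤ volume.real (ball x₀ r) := measureReal_nonneg
  have := key (η / (2 * volume.real (ball x₀ r) + 1)) (by positivity)
  refine this.trans ?_
  gcongr
  rw [mul_div_assoc', div_le_iff₀ (by positivity)]
  nlinarith

lemma ortho (N : ℕ) (hN : 1 ≤ N) (x₀ : EuclideanSpace ℝ (Fin N)) (r : ℝ)
    (h : EuclideanSpace ℝ (Fin N) → ℝ)
    (hd : ContDiffOn ℝ 1 h (ball x₀ r)) (hc : ContinuousOn h (closedBall x₀ r))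
    (h0 : ∀ x ∈ sphere x₀ r, h x = 0)
    (W : EuclideanSpace ℝ (Fin N) → EuclideanSpace ℝ (Fin N)) (hW : IntegrableOn W (ball x₀ r) volume)
    (hWh : IntegrableOn (fun x => fderiv ℝ h x (W x)) (ball x₀ r) volume)
    (ht : ∀ φ : EuclideanSpace ℝ (Fin N) → ℝ, ContDiff ℝ (⊤ : ℕ∞) φ → HasCompactSupport φ →
          tsupport φ ⊆ ball x₀ r → ∫ x in ball x₀ r, fderiv ℝ φ x (W x) = 0) :
    ∫ x in ball x₀ r, fderiv ℝ h x (W x) = 0 := by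
  obtain ⟨K, hK, hST⟩ := exists_ST
  choose! S T hS hT hS0 hT0 hSd hTd hSa hT1 using hST
  let ε : ℕ → ℝ := fun n => 1 / ((n : ℝ) + 1)
  have hε : ∀ n, 0 < ε n := fun n => by positivity
  have hφ : ∀ n, ∃ φ : EuclideanSpace ℝ (Fin N) → ℝ, ContDiff ℝ 1 φ ∧ HasCompactSupport φ ∧
      tsupport φ ⊆ ball x₀ r ∧ (∀ x ∈ ball x₀ r, φ x = T (ε n) (h x)) ∧
      (∀ x ∈ ball x₀ r, fderiv ℝ φ x = deriv (T (ε n)) (h x) • fderiv ℝ h x) := fun n =>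
    trunc_comp N x₀ r h hd hc h0 (T (ε n)) (hT _ (hε n)) (ε n) (hε n) (hT0 _ (hε n))
  choose φ hφ1 hφc hφs hφv hφd using hφ
  have hlim : Filter.Tendsto (fun n => ∫ x in ball x₀ r, fderiv ℝ (φ n) x (W x)) Filter.atTop
      (nhds (∫ x in ball x₀ r, fderiv ℝ h x (W x))) := by
    refine tendsto_integral_of_dominated_convergence (fun x => K * ‖fderiv ℝ h x (W x)‖) ?_
      (hWh.norm.const_mul K) ?_ ?_
    · intro n
      exact (ContinuousLinearMap.apply ℝ ℝ : EuclideanSpace ℝ (Fin N) →L[ℝ] _).aestronglyMeasurable_comp₂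
        hW.aestronglyMeasurable ((hφ1 n).continuous_fderiv one_ne_zero).aestronglyMeasurable
    · intro n
      filter_upwards [ae_restrict_mem measurableSet_ball] with x hx
      rw [hφd n x hx, smul_apply, norm_smul]
      exact mul_le_mul_of_nonneg_right (hTd _ (hε n) _) (norm_nonneg _)
    · filter_upwards [ae_restrict_mem measurableSet_ball, null_level N hN x₀ r h hd] with x hx hx2
      by_cases hhx : h x = 0
      · have hz := hx2 hhx
        have : ∀ n, fderiv ℝ (φ n) x (W x) = 0 := fun n => by rw [hφd n x hx, hz]; simp
        simp_rw [this, hz]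
        simp
      · have hlim : Filter.Tendsto ε Filter.atTop (nhds 0) := tendsto_one_div_add_atTop_nhds_zero_nat
        have hpos : 0 < |h x| / 2 := by positivity
        have hev := hlim.eventually (gt_mem_nhds hpos)
        refine tendsto_const_nhds.congr' ?_
        filter_upwards [hev] with n hn
        rw [hφd n x hx, hT1 _ (hε n) _ (by linarith), one_smul]
  have hz : ∀ n, ∫ x in ball x₀ r, fderiv ℝ (φ n) x (W x) = 0 := fun n =>
    test_C1 N (ball x₀ r) isOpen_ball W hW ht (φ n) (hφ1 n) (hφc n) (hφs n)
  simp_rw [hz] at hlim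
  exact (tendsto_nhds_unique hlim tendsto_const_nhds)

lemma contDiffOn_of_grad (N : ℕ) (U : Set (EuclideanSpace ℝ (Fin N))) (hU : IsOpen U)
    (u : EuclideanSpace ℝ (Fin N) → ℝ) (hd : ∀ x ∈ U, DifferentiableAt ℝ u x)
    (hc : ContinuousOn (fun x => gradient u x) U) : ContDiffOn ℝ 1 u U := by
  have h := contDiffOn_succ_iff_fderiv_of_isOpen (𝕜 := ℝ) (f := u) (n := 0) hU
  rw [zero_add] at h
  rw [h]
  refine ⟨fun x hx => (hd x hx).differentiableWithinAt, by simp, ?_⟩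
  rw [contDiffOn_zero]
  have h2 : fderiv ℝ u = fun x => (InnerProductSpace.toDual ℝ (EuclideanSpace ℝ (Fin N))) (gradient u x) := by
    ext1 x
    rw [toDual_gradient]
  rw [h2]
  exact (LinearIsometryEquiv.continuous _).comp_continuousOn hc

lemma norm_grad (N : ℕ) (u : EuclideanSpace ℝ (Fin N) → ℝ) (x : EuclideanSpace ℝ (Fin N)) :
    ‖gradient u x‖ = ‖fderiv ℝ u x‖ := by
  rw [← toDual_gradient]
  exact ((InnerProductSpace.toDual ℝ (EuclideanSpace ℝ (Fin N))).norm_map _).symm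

lemma cacc_pt (p ψ A m : ℝ) (hp1 : 1 < p) (hp2 : p < 2) (h0 : 0 < ψ) (h1 : ψ ≤ 1) (hA : 0 ≤ A) (hm : 0 ≤ m) :
    ((1 - ψ ^ 2) * A + ψ * m) ^ p ≤ (1 - ψ ^ 2) * A ^ p + m ^ p := by
  have hψ2 : ψ ^ 2 ≤ 1 := by nlinarith
  have hcv0 : ConvexOn ℝ (Ici 0) fun x : ℝ => x ^ p := convexOn_rpow hp1.le
  have hA' : A ∈ Ici (0:ℝ) := hA
  have hm' : m / ψ ∈ Ici (0:ℝ) := by show 0 ≤ m / ψ; positivity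
  have hs1 : 0 ≤ 1 - ψ ^ 2 := by linarith
  have hs2 : 0 ≤ ψ ^ 2 := by positivity
  have hcv := hcv0.2 hA' hm' hs1 hs2 (by ring)
  simp only [smul_eq_mul] at hcv
  rw [show ψ ^ 2 * (m / ψ) = ψ * m by field_simp] at hcv
  refine hcv.trans ?_
  have : ψ ^ 2 * (m / ψ) ^ p ≤ m ^ p := by
    rw [Real.div_rpow hm h0.le, mul_div_assoc', div_le_iff₀ (by positivity), mul_comm]
    refine mul_le_mul_of_nonneg_left ?_ (by positivity)
    rw [← Real.rpow_natCast]
    exact Real.rpow_le_rpow_of_exponent_ge h0 h1 (by push_cast; linarith)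
  linarith

lemma cacc (N : ℕ) (p γ lp lm M δ : ℝ)
    (hp1 : 1 < p) (hp2 : p < 2) (hγ0 : 0 < γ) (hlp : 0 < lp)
    (hlm : 0 < lm) (hM : 0 < M) (hδ : 0 ≤ δ)
    (Ω : Set (EuclideanSpace ℝ (Fin N))) (hΩ : IsOpen Ω)
    (u : EuclideanSpace ℝ (Fin N) → ℝ)
    (hu : APLocMin N p (fun t => δ * Fgam γ lp lm t) Ω u)
    (x₀ : EuclideanSpace ℝ (Fin N)) (R : ℝ) (hR : 0 < R)
    (hsub : closure (Metric.ball x₀ (4 * R)) ⊆ Ω)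
    (hb : ∀ x ∈ Metric.ball x₀ (4 * R), |u x| ≤ M) :
    9 / 16 * ∫ x in ball x₀ (2 * R), ‖gradient u x‖ ^ p ≤ (M / R) ^ p * volume.real (ball x₀ (4 * R)) := by
  obtain ⟨hd, hc, hi, hmin⟩ := hu
  have hCD := contDiffOn_of_grad N Ω hΩ u hd hc
  have h4 : 0 < 4 * R := by positivity
  have hcl : closure (ball x₀ (4 * R)) = closedBall x₀ (4 * R) := closure_ball x₀ h4.ne'
  let ψ : EuclideanSpace ℝ (Fin N) → ℝ := fun x => 1 - ‖x - x₀‖ ^ 2 / (16 * R ^ 2)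
  let ψ' : EuclideanSpace ℝ (Fin N) → (EuclideanSpace ℝ (Fin N) →L[ℝ] ℝ) :=
    fun x => -((1 / (8 * R ^ 2)) • innerSL ℝ (x - x₀))
  have hψd : ∀ x, HasFDerivAt ψ (ψ' x) x := by
    intro x
    have h1 : HasFDerivAt (fun y : EuclideanSpace ℝ (Fin N) => ‖y - x₀‖ ^ 2) (2 • innerSL ℝ (x - x₀)) x := by
      have := ((hasStrictFDerivAt_norm_sq (x - x₀)).hasFDerivAt).comp x ((hasFDerivAt_id x).sub_const x₀)
      rw [ContinuousLinearMap.comp_id] at this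
      exact this
    have h2 := (h1.mul_const ((16 * R ^ 2)⁻¹)).const_sub 1
    refine h2.congr_fderiv ?_
    ext v
    simp only [ψ', neg_apply, smul_apply, smul_eq_mul, nsmul_eq_mul]
    field_simp
    norm_num
    ring
  have hψc : ContDiff ℝ 1 ψ := by
    have : ContDiff ℝ 1 (fun y : EuclideanSpace ℝ (Fin N) => ‖y - x₀‖ ^ 2) :=
      (contDiff_id.sub contDiff_const).norm_sq ℝ
    exact contDiff_const.sub (this.div_const _)
  let v : EuclideanSpace ℝ (Fin N) → ℝ := fun x => (1 - ψ x ^ 2) * u x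
  have hvC : ContDiffOn ℝ 1 v Ω := ((contDiff_const.sub (hψc.pow 2)).contDiffOn).mul hCD
  have hvd : ∀ x ∈ Ω, DifferentiableAt ℝ v x := fun x hx =>
    (hvC.contDiffAt (hΩ.mem_nhds hx)).differentiableAt one_ne_zero
  have hvf : ContinuousOn (fderiv ℝ v) Ω := hvC.continuousOn_fderiv_of_isOpen hΩ le_rfl
  obtain ⟨K, hK⟩ := (isCompact_closedBall x₀ (4 * R)).exists_bound_of_continuousOn (hvf.mono (hcl ▸ hsub))
  have hLip : LipschitzOnWith (Real.toNNReal K) v (closure (ball x₀ (4 * R))) := by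
    rw [hcl]
    refine Convex.lipschitzOnWith_of_nnnorm_fderiv_le (𝕜 := ℝ) (fun x hx => hvd x (hsub (hcl ▸ hx))) ?_
      (convex_closedBall x₀ (4 * R))
    intro x hx
    rw [← NNReal.coe_le_coe, coe_nnnorm]
    exact (hK x hx).trans (Real.le_coe_toNNReal K)
  have hψs : ∀ x ∈ sphere x₀ (4 * R), ψ x = 0 := by
    intro x hx
    rw [mem_sphere, dist_eq_norm] at hx
    simp only [ψ, hx]
    field_simp
    norm_num
  have hmv := hmin x₀ (4 * R) h4 hsub v _ hLip (by
    intro x hx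
    simp [v, hψs x hx])
  have huc : ContinuousOn u (closedBall x₀ (4 * R)) := hCD.continuousOn.mono (hcl ▸ hsub)
  have hIF : IntegrableOn (fun x => δ * Fgam γ lp lm (u x)) (ball x₀ (4 * R)) volume := by
    refine IntegrableOn.mono_set ?_ ball_subset_closedBall
    exact (continuousOn_const.mul ((Fgam_cont γ lp lm hγ0).comp_continuousOn huc)).integrableOn_compact
      (isCompact_closedBall _ _)
  have hIu : IntegrableOn (fun x => ‖gradient u x‖ ^ p) (ball x₀ (4 * R)) volume :=
    hi.mono_set (subset_closure.trans hsub)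
  have hψr : ∀ x ∈ ball x₀ (4 * R), 0 < ψ x ∧ ψ x ≤ 1 := by
    intro x hx
    rw [mem_ball, dist_eq_norm] at hx
    have := norm_nonneg (x - x₀)
    constructor
    · simp only [ψ]
      rw [sub_pos, div_lt_one (by positivity)]
      nlinarith
    · simp only [ψ]
      have : 0 ≤ ‖x - x₀‖ ^ 2 / (16 * R ^ 2) := by positivity
      linarith
  have hIη : IntegrableOn (fun x => ψ x ^ 2 * ‖gradient u x‖ ^ p) (ball x₀ (4 * R)) volume := by
    refine Integrable.mono' hIu ?_ ?_
    · exact ((hψc.continuous.pow 2).aestronglyMeasurable).mul hIu.aestronglyMeasurable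
    · filter_upwards [ae_restrict_mem measurableSet_ball] with x hx
      have h1 := hψr x hx
      have h2 : 0 ≤ ‖gradient u x‖ ^ p := by positivity
      rw [Real.norm_of_nonneg (by positivity)]
      have : ψ x ^ 2 ≤ 1 := by nlinarith
      nlinarith
  have hcst : IntegrableOn (fun _ : EuclideanSpace ℝ (Fin N) => (M / R) ^ p / p) (ball x₀ (4 * R)) volume :=
    integrableOn_const measure_ball_lt_top.ne
  have hmono : ∫ x in ball x₀ (4 * R), (‖gradient v x‖ ^ p / p + δ * Fgam γ lp lm (v x)) ≤
      ∫ x in ball x₀ (4 * R), ((‖gradient u x‖ ^ p / p + δ * Fgam γ lp lm (u x)) +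
        ((M / R) ^ p / p - (ψ x ^ 2 * ‖gradient u x‖ ^ p) / p)) := by
    refine integral_mono_of_nonneg ?_ (((hIu.div_const p).add hIF).add (hcst.sub (hIη.div_const p))) ?_
    · filter_upwards with x
      have := Fgam_nonneg γ lp lm hlp hlm (v x)
      show 0 ≤ ‖gradient v x‖ ^ p / p + δ * Fgam γ lp lm (v x)
      positivity
    · filter_upwards [ae_restrict_mem measurableSet_ball] with x hx
      have hxΩ : x ∈ Ω := hsub (subset_closure hx)
      obtain ⟨hψ0, hψ1⟩ := hψr x hx
      have hψ2 : ψ x ^ 2 ≤ 1 := by nlinarith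
      have hF : Fgam γ lp lm (v x) ≤ Fgam γ lp lm (u x) :=
        Fgam_mono γ lp lm hγ0 hlp hlm (1 - ψ x ^ 2) (u x) (by linarith) (by nlinarith)
      have hfd : fderiv ℝ v x = (1 - ψ x ^ 2) • fderiv ℝ u x + u x • (-((2 * ψ x) • ψ' x)) := by
        have h1 : HasFDerivAt (fun y => 1 - ψ y ^ 2) (-((2 * ψ x) • ψ' x)) x := by
          have := ((hψd x).pow 2).const_sub 1
          refine this.congr_fderiv ?_
          simp
        exact (h1.mul (hd x hxΩ).hasFDerivAt).fderiv
      have hψ'n : ‖ψ' x‖ ≤ 1 / (2 * R) := by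
        simp only [ψ']
        rw [norm_neg, norm_smul, innerSL_apply_norm, Real.norm_of_nonneg (by positivity)]
        rw [mem_ball, dist_eq_norm] at hx
        rw [div_mul_eq_mul_div, one_mul, div_le_div_iff₀ (by positivity) (by positivity)]
        nlinarith
      have hn : ‖gradient v x‖ ≤ (1 - ψ x ^ 2) * ‖gradient u x‖ + ψ x * (M / R) := by
        rw [norm_grad, norm_grad, hfd]
        refine (norm_add_le _ _).trans ?_
        rw [norm_smul, norm_smul, norm_neg, norm_smul, Real.norm_of_nonneg (by linarith : 0 ≤ 1 - ψ x ^ 2),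
          Real.norm_of_nonneg (by linarith : 0 ≤ 2 * ψ x), Real.norm_eq_abs]
        refine add_le_add le_rfl ?_
        calc |u x| * (2 * ψ x * ‖ψ' x‖) ≤ M * (2 * ψ x * (1 / (2 * R))) := by
              apply mul_le_mul (hb x hx) _ (by positivity) hM.le
              exact mul_le_mul_of_nonneg_left hψ'n (by linarith)
          _ = ψ x * (M / R) := by field_simp
      have hnp : ‖gradient v x‖ ^ p ≤ (1 - ψ x ^ 2) * ‖gradient u x‖ ^ p + (M / R) ^ p :=
        (Real.rpow_le_rpow (norm_nonneg _) hn (by linarith)).trans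
          (cacc_pt p (ψ x) ‖gradient u x‖ (M / R) hp1 hp2 hψ0 hψ1 (norm_nonneg _) (by positivity))
      have h5 := mul_le_mul_of_nonneg_left hF hδ
      have h6 := div_le_div_of_nonneg_right hnp (by linarith : 0 ≤ p)
      have e : ((1 - ψ x ^ 2) * ‖gradient u x‖ ^ p + (M / R) ^ p) / p =
        ‖gradient u x‖ ^ p / p + ((M / R) ^ p / p - (ψ x ^ 2 * ‖gradient u x‖ ^ p) / p) := by ring
      rw [e] at h6
      show ‖gradient v x‖ ^ p / p + δ * Fgam γ lp lm (v x) ≤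
        (‖gradient u x‖ ^ p / p + δ * Fgam γ lp lm (u x)) +
        ((M / R) ^ p / p - (ψ x ^ 2 * ‖gradient u x‖ ^ p) / p)
      linarith
  have hsplit : ∫ x in ball x₀ (4 * R), ((‖gradient u x‖ ^ p / p + δ * Fgam γ lp lm (u x)) +
        ((M / R) ^ p / p - (ψ x ^ 2 * ‖gradient u x‖ ^ p) / p)) =
      (∫ x in ball x₀ (4 * R), (‖gradient u x‖ ^ p / p + δ * Fgam γ lp lm (u x))) +
      (volume.real (ball x₀ (4 * R)) * ((M / R) ^ p / p) - (∫ x in ball x₀ (4 * R), ψ x ^ 2 * ‖gradient u x‖ ^ p) / p) := by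
    have e1 := integral_add ((hIu.div_const p).add hIF) (hcst.sub (hIη.div_const p))
    have e2 := integral_sub hcst (hIη.div_const p)
    simp only [Pi.add_apply, Pi.sub_apply] at e1 e2
    rw [e1, e2, setIntegral_const, smul_eq_mul, integral_div]
  have hfin : (∫ x in ball x₀ (4 * R), ψ x ^ 2 * ‖gradient u x‖ ^ p) / p ≤
      volume.real (ball x₀ (4 * R)) * ((M / R) ^ p / p) := by
    have := hmv.trans (hmono.trans hsplit.le)
    linarith
  rw [mul_div_assoc', div_le_div_iff_of_pos_right (by linarith)] at hfin
  have hss : ball x₀ (2 * R) ⊆ ball x₀ (4 * R) := ball_subset_ball (by linarith)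
  calc 9 / 16 * ∫ x in ball x₀ (2 * R), ‖gradient u x‖ ^ p
      = ∫ x in ball x₀ (2 * R), 9 / 16 * ‖gradient u x‖ ^ p := by rw [integral_const_mul]
    _ ≤ ∫ x in ball x₀ (2 * R), ψ x ^ 2 * ‖gradient u x‖ ^ p := by
        refine setIntegral_mono_on ((hIu.mono_set hss).const_mul _) (hIη.mono_set hss) measurableSet_ball ?_
        intro x hx
        refine mul_le_mul_of_nonneg_right ?_ (by positivity)
        have : 3 / 4 ≤ ψ x := by
          rw [mem_ball, dist_eq_norm] at hx
          have h0 := norm_nonneg (x - x₀)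
          have : ‖x - x₀‖ ^ 2 / (16 * R ^ 2) ≤ 1 / 4 := by
            rw [div_le_div_iff₀ (by positivity) (by norm_num)]
            nlinarith
          simp only [ψ]; linarith
        nlinarith
    _ ≤ ∫ x in ball x₀ (4 * R), ψ x ^ 2 * ‖gradient u x‖ ^ p := by
        refine setIntegral_mono_set hIη ?_ hss.eventuallyLE
        filter_upwards with x
        show 0 ≤ ψ x ^ 2 * ‖gradient u x‖ ^ p
        positivity
    _ ≤ _ := hfin.trans_eq (mul_comm _ _)

lemma interp_pt (μ s t : ℝ) (hμ0 : 0 < μ) (hμ1 : μ ≤ 1) (hs : 0 < s) (ht : 0 ≤ t) :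
    t ^ μ ≤ s ^ μ + s ^ (μ - 1) * t := by
  have h1 : 0 ≤ s ^ μ := by positivity
  have h2 : 0 ≤ s ^ (μ - 1) * t := by positivity
  rcases le_total t s with h | h
  · have := Real.rpow_le_rpow ht h hμ0.le
    linarith
  · have h3 : t ^ (μ - 1) ≤ s ^ (μ - 1) := Real.rpow_le_rpow_of_nonpos hs h (by linarith)
    have ht' : 0 < t := hs.trans_le h
    have h4 : t ^ μ = t ^ (μ - 1) * t := by
      rw [Real.rpow_sub ht', Real.rpow_one]; field_simp
    rw [h4]
    have := mul_le_mul_of_nonneg_right h3 ht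
    linarith

lemma le_one_add_rpow (p t : ℝ) (hp : 1 ≤ p) (ht : 0 ≤ t) : t ≤ 1 + t ^ p := by
  rcases le_total t 1 with h | h
  · have := Real.rpow_nonneg ht p
    linarith
  · have := Real.rpow_le_rpow_of_exponent_le h hp
    rw [Real.rpow_one] at this
    linarith

lemma W_bound (N : ℕ) (p : ℝ) (hp1 : 1 < p) (b : EuclideanSpace ℝ (Fin N)) :
    ‖‖b‖ ^ (p - 2) • b‖ = ‖b‖ ^ (p - 1) := by
  rw [norm_smul, Real.norm_of_nonneg (by positivity)]
  rcases eq_or_lt_of_le (norm_nonneg b) with h | h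
  · rw [← h, Real.zero_rpow (by linarith : p - 1 ≠ 0)]; simp
  · nth_rewrite 2 [← Real.rpow_one ‖b‖]
    rw [← Real.rpow_add h]; congr 1; ring

lemma W_inner_bound (N : ℕ) (p : ℝ) (hp1 : 1 < p) (a b : EuclideanSpace ℝ (Fin N)) :
    |⟪‖b‖ ^ (p - 2) • b, a - b⟫_ℝ| ≤ 2 * (‖a‖ ^ p + ‖b‖ ^ p) := by
  refine (abs_real_inner_le_norm _ _).trans ?_
  rw [W_bound N p hp1]
  set m := max ‖a‖ ‖b‖ with hm
  have hm0 : 0 ≤ m := (norm_nonneg a).trans (le_max_left _ _)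
  have h1 : ‖b‖ ^ (p - 1) ≤ m ^ (p - 1) := Real.rpow_le_rpow (norm_nonneg _) (le_max_right _ _) (by linarith)
  have h2 : ‖a - b‖ ≤ 2 * m := by
    refine (norm_sub_le a b).trans ?_
    linarith [le_max_left ‖a‖ ‖b‖, le_max_right ‖a‖ ‖b‖]
  have h3 : m ^ (p - 1) * m = m ^ p := by
    rcases eq_or_lt_of_le hm0 with h | h
    · rw [← h, Real.zero_rpow (by linarith : p ≠ 0)]; simp
    · nth_rewrite 2 [← Real.rpow_one m]
      rw [← Real.rpow_add h]; congr 1; ring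
  have h4 : m ^ p ≤ ‖a‖ ^ p + ‖b‖ ^ p := by
    have h1 : 0 ≤ ‖a‖ ^ p := by positivity
    have h2 : 0 ≤ ‖b‖ ^ p := by positivity
    rcases max_cases ‖a‖ ‖b‖ with h | h <;> rw [hm, h.1] <;> linarith
  calc ‖b‖ ^ (p - 1) * ‖a - b‖ ≤ m ^ (p - 1) * (2 * m) :=
        mul_le_mul h1 h2 (norm_nonneg _) (by positivity)
    _ = 2 * m ^ p := by rw [← h3]; ring
    _ ≤ _ := by linarith

lemma main_est (N : ℕ) (hN : 1 ≤ N) (p γ lp lm δ₀ M : ℝ)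
    (hp1 : 1 < p) (hp2 : p < 2) (hγ0 : 0 < γ) (hlp : 0 < lp)
    (hlm : 0 < lm) (hδ₀ : 0 < δ₀) (hM : 0 < M) :
    ∃ C : ℝ, 0 < C ∧
      ∀ (Ω : Set (EuclideanSpace ℝ (Fin N))), IsOpen Ω →
      ∀ δ : ℝ, 0 ≤ δ → δ ≤ δ₀ →
      ∀ u : EuclideanSpace ℝ (Fin N) → ℝ,
        APLocMin N p (fun t => δ * Fgam γ lp lm t) Ω u →
      ∀ (x₀ : EuclideanSpace ℝ (Fin N)) (R : ℝ), 0 < R →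
        closure (Metric.ball x₀ (4 * R)) ⊆ Ω →
        (∀ x ∈ Metric.ball x₀ (4 * R), |u x| ≤ M) →
      ∀ w : EuclideanSpace ℝ (Fin N) → ℝ,
        (∀ x ∈ Metric.ball x₀ (2 * R), DifferentiableAt ℝ w x) →
        ContinuousOn (fun x => gradient w x) (Metric.ball x₀ (2 * R)) →
        ContinuousOn w (closure (Metric.ball x₀ (2 * R))) →
        (∀ φ : EuclideanSpace ℝ (Fin N) → ℝ, ContDiff ℝ (⊤ : ℕ∞) φ → HasCompactSupport φ →
          tsupport φ ⊆ Metric.ball x₀ (2 * R) →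
          (∫ x in Metric.ball x₀ (2 * R),
            ‖gradient w x‖ ^ (p - 2) * ⟪gradient w x, gradient φ x⟫_ℝ) = 0) →
        Set.EqOn w u (Metric.sphere x₀ (2 * R)) →
        sSup ((fun x => |w x|) '' Metric.ball x₀ (2 * R)) ≤
          sSup ((fun x => |u x|) '' Metric.ball x₀ (2 * R)) →
        IntegrableOn (fun x => ‖gradient w x‖ ^ p) (Metric.ball x₀ (2 * R)) volume →
        (∫ x in Metric.ball x₀ (2 * R), ‖gradient w x‖ ^ p) ≤
          (∫ x in Metric.ball x₀ (2 * R), ‖gradient u x‖ ^ p) →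
        (∫ x in Metric.ball x₀ (2 * R),
            (‖gradient u x‖ ^ p / p + δ * Fgam γ lp lm (u x))) ≤
          (∫ x in Metric.ball x₀ (2 * R),
            (‖gradient w x‖ ^ p / p + δ * Fgam γ lp lm (w x))) →
        (∫ x in Metric.ball x₀ R,
                ‖Vmap N p (gradient u x) - Vmap N p (gradient w x)‖ ^ (2 : ℝ)) ≤
              C * R ^ ((N : ℝ) + p * (min γ 1) / (2 - min γ 1)) := by
  obtain ⟨K1, hK1, hF⟩ := Fgam_diff γ lp lm M hγ0 hM hlp hlm
  obtain ⟨K2, hK2, hPoin⟩ := poincare_L1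
  set μ := min γ 1 with hμ
  have hμ0 : 0 < μ := lt_min hγ0 one_pos
  have hμ1 : μ ≤ 1 := min_le_right _ _
  set ω : ℝ := volume.real (ball (0 : EuclideanSpace ℝ (Fin N)) 1) with hω
  have hω0 : 0 < ω := by
    rw [hω, measureReal_def]
    exact ENNReal.toReal_pos (measure_ball_pos volume 0 one_pos).ne' measure_ball_lt_top.ne
  have hp0 : 0 < p - 1 := by linarith
  set A0 : ℝ := p * δ₀ * K1 * K2 * 2 with hA0
  have hA0p : 0 < A0 := by positivity
  refine ⟨4 / (p - 1) * (4 ^ N * ω * (p * δ₀ * K1 + 4 / (p - 1) * A0 ^ 2 * (1 + 128 / 9 * M ^ p))),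
    by positivity, ?_⟩
  intro Ω hΩ δ hδ hδ1 u hu x₀ R hR hsub hb w hwd hwc hwcl htest hbd hsup hIw hle hmin
  have hcacc := cacc N p γ lp lm M δ hp1 hp2 hγ0 hlp hlm hM hδ Ω hΩ u hu x₀ R hR hsub hb
  obtain ⟨hud, huc, hui, -⟩ := hu
  have h2R : 0 < 2 * R := by positivity
  have hclB : closure (ball x₀ (2 * R)) = closedBall x₀ (2 * R) := closure_ball x₀ h2R.ne'
  rw [hclB] at hwcl
  have hcB4 : closedBall x₀ (2 * R) ⊆ ball x₀ (4 * R) := closedBall_subset_ball (by linarith)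
  have hcBΩ : closedBall x₀ (2 * R) ⊆ Ω := hcB4.trans (subset_closure.trans hsub)
  have hBΩ : ball x₀ (2 * R) ⊆ Ω := ball_subset_closedBall.trans hcBΩ
  have huC : ContDiffOn ℝ 1 u Ω := contDiffOn_of_grad N Ω hΩ u hud huc
  have hwC : ContDiffOn ℝ 1 w (ball x₀ (2 * R)) := contDiffOn_of_grad N _ isOpen_ball w hwd hwc
  have hucl : ContinuousOn u (closedBall x₀ (2 * R)) := huC.continuousOn.mono hcBΩ
  have hIu : IntegrableOn (fun x => ‖gradient u x‖ ^ p) (ball x₀ (2 * R)) volume := hui.mono_set hBΩ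
  have hvol : ∀ r : ℝ, 0 < r → volume.real (ball x₀ r) = r ^ N * ω := by
    intro r hr
    rw [hω, measureReal_def, measureReal_def, Measure.addHaar_ball_of_pos volume x₀ hr, ENNReal.toReal_mul,
      ENNReal.toReal_ofReal (by positivity)]
    simp
  -- bounds
  have hubd : ∀ x ∈ ball x₀ (2 * R), |u x| ≤ M := fun x hx => hb x (hcB4 (ball_subset_closedBall hx))
  have hwbd : ∀ x ∈ ball x₀ (2 * R), |w x| ≤ M := by
    intro x hx
    obtain ⟨C, hC⟩ := (isCompact_closedBall x₀ (2 * R)).exists_bound_of_continuousOn hwcl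
    have h1 : |w x| ≤ sSup ((fun x => |w x|) '' Metric.ball x₀ (2 * R)) := by
      apply le_csSup
      · refine ⟨C, ?_⟩
        rintro _ ⟨y, hy, rfl⟩
        exact hC y (ball_subset_closedBall hy)
      · exact ⟨x, hx, rfl⟩
    refine h1.trans (hsup.trans ?_)
    apply csSup_le
    · exact ⟨_, x, hx, rfl⟩
    · rintro _ ⟨y, hy, rfl⟩
      exact hubd y hy
  set B := ball x₀ (2 * R) with hB
  have hBm : MeasurableSet B := measurableSet_ball
  have hBfin : volume B ≠ ⊤ := measure_ball_lt_top.ne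
  -- the difference
  let h : EuclideanSpace ℝ (Fin N) → ℝ := fun x => u x - w x
  have hhC : ContDiffOn ℝ 1 h B := (huC.mono hBΩ).sub hwC
  have hhc : ContinuousOn h (closedBall x₀ (2 * R)) := hucl.sub hwcl
  have hh0 : ∀ x ∈ sphere x₀ (2 * R), h x = 0 := by
    intro x hx
    simp [h, hbd hx]
  have hhd : ∀ x ∈ B, ∀ v, fderiv ℝ h x v = ⟪v, gradient u x - gradient w x⟫_ℝ := by
    intro x hx v
    have e : fderiv ℝ h x = fderiv ℝ u x - fderiv ℝ w x := fderiv_fun_sub (hud x (hBΩ hx)) (hwd x hx)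
    rw [e, sub_apply, inner_sub_right, inner_gradient_right, inner_gradient_right]
    simp
  have hhn : ∀ x ∈ B, ‖fderiv ℝ h x‖ = ‖gradient u x - gradient w x‖ := by
    intro x hx
    have e : fderiv ℝ h x = fderiv ℝ u x - fderiv ℝ w x := fderiv_fun_sub (hud x (hBΩ hx)) (hwd x hx)
    rw [e, ← toDual_gradient, ← toDual_gradient, ← map_sub, LinearIsometryEquiv.norm_map]
  -- measurability
  have hma : AEStronglyMeasurable (fun x => gradient u x) (volume.restrict B) :=
    (huc.mono hBΩ).aestronglyMeasurable hBm
  have hmb : AEStronglyMeasurable (fun x => gradient w x) (volume.restrict B) :=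
    hwc.aestronglyMeasurable hBm
  have hmW : AEStronglyMeasurable (fun x => ‖gradient w x‖ ^ (p - 2) • gradient w x) (volume.restrict B) :=
    (hmb.norm.aemeasurable.pow_const _).aestronglyMeasurable.smul hmb
  have hmVa : AEStronglyMeasurable (fun x => Vmap N p (gradient u x)) (volume.restrict B) :=
    (hma.norm.aemeasurable.pow_const _).aestronglyMeasurable.smul hma
  have hmVb : AEStronglyMeasurable (fun x => Vmap N p (gradient w x)) (volume.restrict B) :=
    (hmb.norm.aemeasurable.pow_const _).aestronglyMeasurable.smul hmb
  have hcint : ∀ c : ℝ, IntegrableOn (fun _ : EuclideanSpace ℝ (Fin N) => c) B volume := fun c =>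
    integrableOn_const hBfin
  -- integrability
  have hIW : IntegrableOn (fun x => ‖gradient w x‖ ^ (p - 2) • gradient w x) B volume := by
    refine Integrable.mono' ((hcint 1).add hIw) hmW ?_
    filter_upwards with x
    rw [W_bound N p hp1]
    show _ ≤ 1 + ‖gradient w x‖ ^ p
    rcases le_total ‖gradient w x‖ 1 with h | h
    · have := Real.rpow_le_one (norm_nonneg _) h (by linarith : 0 ≤ p - 1)
      have := Real.rpow_nonneg (norm_nonneg (gradient w x)) p
      linarith
    · have := Real.rpow_le_rpow_of_exponent_le h (by linarith : p - 1 ≤ p)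
      linarith
  have hIin : IntegrableOn (fun x => ⟪‖gradient w x‖ ^ (p - 2) • gradient w x, gradient u x - gradient w x⟫_ℝ) B volume := by
    refine Integrable.mono' ((hIu.add hIw).const_mul 2) (hmW.inner (hma.sub hmb)) ?_
    filter_upwards with x
    exact W_inner_bound N p hp1 _ _
  have hIWh : IntegrableOn (fun x => fderiv ℝ h x (‖gradient w x‖ ^ (p - 2) • gradient w x)) B volume :=
    hIin.congr_fun (fun x hx => (hhd x hx _).symm) hBm
  have hIab : IntegrableOn (fun x => ‖gradient u x - gradient w x‖) B volume := by
    refine Integrable.mono' ((hcint 2).add (hIu.add hIw)) (hma.sub hmb).norm ?_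
    filter_upwards with x
    rw [norm_norm]
    have h1 := le_one_add_rpow p ‖gradient u x‖ hp1.le (norm_nonneg _)
    have h2 := le_one_add_rpow p ‖gradient w x‖ hp1.le (norm_nonneg _)
    show _ ≤ 2 + (‖gradient u x‖ ^ p + ‖gradient w x‖ ^ p)
    linarith [norm_sub_le (gradient u x) (gradient w x)]
  have hIfh : IntegrableOn (fun x => ‖fderiv ℝ h x‖) B volume :=
    hIab.congr_fun (fun x hx => (hhn x hx).symm) hBm
  have hsqV : ∀ c : EuclideanSpace ℝ (Fin N), ‖Vmap N p c‖ ^ 2 = ‖c‖ ^ p := by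
    intro c
    rw [Vmap_norm N p hp1, ← Real.rpow_natCast, ← Real.rpow_mul (norm_nonneg c)]; congr 1; push_cast; ring
  have hID : IntegrableOn (fun x => ‖Vmap N p (gradient u x) - Vmap N p (gradient w x)‖ ^ 2) B volume := by
    refine Integrable.mono' ((hIu.add hIw).const_mul 2) ((hmVa.sub hmVb).norm.pow 2) ?_
    filter_upwards with x
    rw [Real.norm_of_nonneg (by positivity)]
    show _ ≤ 2 * (‖gradient u x‖ ^ p + ‖gradient w x‖ ^ p)
    rw [← hsqV, ← hsqV]
    have h1 := norm_sub_le (Vmap N p (gradient u x)) (Vmap N p (gradient w x))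
    have h2 := norm_nonneg (Vmap N p (gradient u x) - Vmap N p (gradient w x))
    nlinarith [sq_nonneg (‖Vmap N p (gradient u x)‖ - ‖Vmap N p (gradient w x)‖)]
  have hIh : IntegrableOn (fun x => |h x|) B volume :=
    (hhc.abs.integrableOn_compact (isCompact_closedBall _ _)).mono_set ball_subset_closedBall
  have hIFu : IntegrableOn (fun x => δ * Fgam γ lp lm (u x)) B volume :=
    ((continuousOn_const.mul ((Fgam_cont γ lp lm hγ0).comp_continuousOn hucl)).integrableOn_compact
      (isCompact_closedBall _ _)).mono_set ball_subset_closedBall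
  have hIFw : IntegrableOn (fun x => δ * Fgam γ lp lm (w x)) B volume :=
    ((continuousOn_const.mul ((Fgam_cont γ lp lm hγ0).comp_continuousOn hwcl)).integrableOn_compact
      (isCompact_closedBall _ _)).mono_set ball_subset_closedBall
  -- orthogonality
  have horth : ∫ x in B, ⟪‖gradient w x‖ ^ (p - 2) • gradient w x, gradient u x - gradient w x⟫_ℝ = 0 := by
    have := ortho N hN x₀ (2 * R) h hhC hhc hh0 _ hIW hIWh (by
      intro φ h1 h2 h3
      rw [← htest φ h1 h2 h3]
      congr 1
      ext x
      rw [← inner_gradient_left, inner_smul_right, real_inner_comm])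
    rw [← this]
    exact setIntegral_congr_fun hBm (fun x hx => (hhd x hx _).symm)
  set E := ∫ x in B, ‖Vmap N p (gradient u x) - Vmap N p (gradient w x)‖ ^ 2 with hE
  set Gu := ∫ x in B, ‖gradient u x‖ ^ p with hGu
  set Gw := ∫ x in B, ‖gradient w x‖ ^ p with hGw
  have step1 : (p - 1) / 2 * E ≤ Gu - Gw := by
    have h1 : ∫ x in B, (p - 1) / 2 * ‖Vmap N p (gradient u x) - Vmap N p (gradient w x)‖ ^ 2 ≤
        ∫ x in B, ((‖gradient u x‖ ^ p - ‖gradient w x‖ ^ p) -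
          p * ⟪‖gradient w x‖ ^ (p - 2) • gradient w x, gradient u x - gradient w x⟫_ℝ) := by
      refine integral_mono (hID.const_mul _) ((hIu.sub hIw).sub (hIin.const_mul p)) ?_
      intro x
      have := bregman N p hp1 hp2 (gradient u x) (gradient w x)
      show _ ≤ (‖gradient u x‖ ^ p - ‖gradient w x‖ ^ p) -
          p * ⟪‖gradient w x‖ ^ (p - 2) • gradient w x, gradient u x - gradient w x⟫_ℝ
      rw [real_inner_smul_left]
      exact this
    have e1 := integral_sub (hIu.sub hIw) (hIin.const_mul p)
    have e2 := integral_sub hIu hIw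
    simp only [Pi.sub_apply] at e1 e2
    rw [integral_const_mul, e1, e2, integral_const_mul, horth] at h1
    linarith
  set s := R ^ (p / (2 - μ)) with hs
  have hs0 : 0 < s := by positivity
  have step2 : Gu - Gw ≤ p * (δ₀ * K1 * (s ^ μ * volume.real B + s ^ (μ - 1) * ∫ x in B, |h x|)) := by
    have e1 := integral_add (hIu.div_const p) hIFu
    have e2 := integral_add (hIw.div_const p) hIFw
    rw [e1, e2, integral_div, integral_div] at hmin
    have h1 : ∫ x in B, (δ * Fgam γ lp lm (w x) - δ * Fgam γ lp lm (u x)) ≤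
        ∫ x in B, δ₀ * K1 * (s ^ μ + s ^ (μ - 1) * |h x|) := by
      refine setIntegral_mono_on (hIFw.sub hIFu) (((hcint _).add (hIh.const_mul _)).const_mul _) hBm ?_
      intro x hx
      have h1 := hF (w x) (u x) (hwbd x hx) (hubd x hx)
      have h2 : |w x - u x| = |h x| := abs_sub_comm _ _
      rw [h2] at h1
      have h3 := interp_pt μ s |h x| hμ0 hμ1 hs0 (abs_nonneg _)
      have h4 : 0 ≤ |h x| ^ μ := by positivity
      calc δ * Fgam γ lp lm (w x) - δ * Fgam γ lp lm (u x)
          = δ * (Fgam γ lp lm (w x) - Fgam γ lp lm (u x)) := by ring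
        _ ≤ δ * (K1 * |h x| ^ μ) := mul_le_mul_of_nonneg_left h1 hδ
        _ ≤ δ₀ * (K1 * |h x| ^ μ) := mul_le_mul_of_nonneg_right hδ1 (by positivity)
        _ = δ₀ * K1 * |h x| ^ μ := by ring
        _ ≤ _ := mul_le_mul_of_nonneg_left h3 (by positivity)
    have e3 := integral_sub hIFw hIFu
    have e4 := integral_add (hcint (s ^ μ)) (hIh.const_mul (s ^ (μ - 1)))
    rw [e3, integral_const_mul (δ₀ * K1), e4, setIntegral_const, integral_const_mul (s ^ (μ - 1)), smul_eq_mul] at h1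
    have h5 : Gu / p - Gw / p ≤ δ₀ * K1 * (volume.real B * s ^ μ + s ^ (μ - 1) * ∫ x in B, |h x|) := by
      linarith
    rw [← sub_div, div_le_iff₀ (by linarith)] at h5
    linarith
  have step3 : ∫ x in B, |h x| ≤ K2 * (2 * R) * ∫ x in B, ‖gradient u x - gradient w x‖ := by
    have := hPoin N hN x₀ (2 * R) h2R h hhC hhc hh0 hIfh
    rwa [setIntegral_congr_fun hBm hhn] at this
  have step4 : A0 * s ^ (μ - 1) * R * (∫ x in B, ‖gradient u x - gradient w x‖) ≤
      (p - 1) / 4 * E + 4 / (p - 1) * (A0 * s ^ (μ - 1)) ^ 2 *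
        (R ^ p * (volume.real B + R ^ p * (4 * (Gu + Gw)))) := by
    have h1 : ∫ x in B, A0 * s ^ (μ - 1) * R * ‖gradient u x - gradient w x‖ ≤
        ∫ x in B, ((p - 1) / 4 * ‖Vmap N p (gradient u x) - Vmap N p (gradient w x)‖ ^ 2 +
          4 / (p - 1) * (A0 * s ^ (μ - 1)) ^ 2 *
            (R ^ p * (1 + R ^ p * (4 * (‖gradient u x‖ ^ p + ‖gradient w x‖ ^ p))))) := by
      refine integral_mono (hIab.const_mul _) ((hID.const_mul _).add
        (((((hcint 1).add (((hIu.add hIw).const_mul 4).const_mul _)).const_mul _)).const_mul _)) ?_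
      intro x
      exact young_pt N p hp1 hp2 _ _ _ R (by positivity) hR
    have e1 := integral_add (hID.const_mul ((p - 1) / 4))
        ((((hcint 1).add (((hIu.add hIw).const_mul 4).const_mul (R ^ p))).const_mul (R ^ p)).const_mul
          (4 / (p - 1) * (A0 * s ^ (μ - 1)) ^ 2))
    have e2 := integral_add (hcint 1) (((hIu.add hIw).const_mul 4).const_mul (R ^ p))
    have e3 := integral_add hIu hIw
    simp only [Pi.add_apply] at e1 e2 e3
    rw [e1, integral_const_mul, integral_const_mul, integral_const_mul, integral_const_mul, e2,
      integral_const_mul, integral_const_mul, e3, setIntegral_const, smul_eq_mul, mul_one] at h1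
    exact h1
  have hsR : (s ^ (μ - 1)) ^ 2 * R ^ p = s ^ μ := by
    have h1 : R ^ p = s ^ (2 - μ) := by
      rw [hs, ← Real.rpow_mul hR.le, div_mul_cancel₀]
      linarith
    rw [h1, ← Real.rpow_natCast, ← Real.rpow_mul hs0.le, ← Real.rpow_add hs0]
    congr 1; push_cast; ring
  have hvB : volume.real B ≤ 4 ^ N * ω * R ^ N := by
    rw [hB, hvol _ h2R]
    have : (2 * R) ^ N ≤ (4 * R) ^ N := pow_le_pow_left₀ h2R.le (by linarith) N
    rw [mul_pow 4 R] at this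
    nlinarith
  have hcacc2 : R ^ p * Gu ≤ 16 / 9 * M ^ p * (4 ^ N * ω * R ^ N) := by
    rw [hvol _ (by positivity), Real.div_rpow hM.le hR.le, div_mul_eq_mul_div (M ^ p), le_div_iff₀ (by positivity), mul_pow] at hcacc
    linarith
  have hfinal : (p - 1) / 4 * E ≤ (4 ^ N * ω * (p * δ₀ * K1 + 4 / (p - 1) * A0 ^ 2 * (1 + 128 / 9 * M ^ p))) *
      (s ^ μ * R ^ N) := by
    have hb1 : R ^ p * (4 * (Gu + Gw)) ≤ 128 / 9 * M ^ p * (4 ^ N * ω * R ^ N) := by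
      have : R ^ p * Gw ≤ R ^ p * Gu := mul_le_mul_of_nonneg_left hle (by positivity)
      linarith
    have hb2 : 4 / (p - 1) * (A0 * s ^ (μ - 1)) ^ 2 *
        (R ^ p * (volume.real B + R ^ p * (4 * (Gu + Gw)))) ≤
        4 / (p - 1) * A0 ^ 2 * s ^ μ * ((1 + 128 / 9 * M ^ p) * (4 ^ N * ω * R ^ N)) := by
      have e : 4 / (p - 1) * (A0 * s ^ (μ - 1)) ^ 2 *
        (R ^ p * (volume.real B + R ^ p * (4 * (Gu + Gw)))) =
        4 / (p - 1) * A0 ^ 2 * ((s ^ (μ - 1)) ^ 2 * R ^ p) * (volume.real B + R ^ p * (4 * (Gu + Gw))) := by ring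
      rw [e, hsR]
      refine mul_le_mul_of_nonneg_left ?_ (by positivity)
      linarith
    have hb3 : p * (δ₀ * K1 * (s ^ μ * volume.real B)) ≤ p * (δ₀ * K1 * (s ^ μ * (4 ^ N * ω * R ^ N))) := by
      gcongr
    have hb4 : p * (δ₀ * K1 * (s ^ (μ - 1) * ∫ x in B, |h x|)) ≤
        p * (δ₀ * K1 * (s ^ (μ - 1) * (K2 * (2 * R) * ∫ x in B, ‖gradient u x - gradient w x‖))) := by
      gcongr
    have e5 : p * (δ₀ * K1 * (s ^ (μ - 1) * (K2 * (2 * R) * ∫ x in B, ‖gradient u x - gradient w x‖))) =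
        A0 * s ^ (μ - 1) * R * (∫ x in B, ‖gradient u x - gradient w x‖) := by rw [hA0]; ring
    rw [e5] at hb4
    linarith
  have hpow : s ^ μ * R ^ N = R ^ ((N : ℝ) + p * μ / (2 - μ)) := by
    rw [hs, ← Real.rpow_mul hR.le, ← Real.rpow_natCast, ← Real.rpow_add hR]
    congr 1; ring
  rw [hpow] at hfinal
  have hEfin : E ≤ 4 / (p - 1) * (4 ^ N * ω * (p * δ₀ * K1 + 4 / (p - 1) * A0 ^ 2 * (1 + 128 / 9 * M ^ p))) *
      R ^ ((N : ℝ) + p * μ / (2 - μ)) := by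
    have e : E = 4 / (p - 1) * ((p - 1) / 4 * E) := by field_simp
    rw [e, mul_assoc]
    exact mul_le_mul_of_nonneg_left hfinal (by positivity)
  refine le_trans ?_ hEfin
  simp_rw [Real.rpow_two]
  refine setIntegral_mono_set hID ?_ (ball_subset_ball (by linarith)).eventuallyLE
  filter_upwards with x
  show 0 ≤ ‖Vmap N p (gradient u x) - Vmap N p (gradient w x)‖ ^ 2
  positivity

/-- Comparison estimate with the `p`-harmonic replacement `w` of a local minimizer of
`J_δ` in the singular regime `1 < p < 2`, via the map `V`. -/
theorem stmt12 (N : ℕ) (hN : 1 ≤ N) (p γ lp lm δ₀ M : ℝ)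
    (hp1 : 1 < p) (hp2 : p < 2) (hγ0 : 0 < γ) (hγp : γ < p) (hlp : 0 < lp)
    (hlm : 0 < lm) (hδ₀ : 0 < δ₀) (hM : 0 < M) :
    ∃ C : ℝ, 0 < C ∧
      ∀ (Ω : Set (EuclideanSpace ℝ (Fin N))), IsOpen Ω → Bornology.IsBounded Ω →
      ∀ δ : ℝ, 0 ≤ δ → δ ≤ δ₀ →
      ∀ u : EuclideanSpace ℝ (Fin N) → ℝ,
        APLocMin N p (fun t => δ * Fgam γ lp lm t) Ω u →
      ∀ (x₀ : EuclideanSpace ℝ (Fin N)) (R : ℝ), 0 < R →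
        closure (Metric.ball x₀ (4 * R)) ⊆ Ω →
        (∀ x ∈ Metric.ball x₀ (4 * R), |u x| ≤ M) →
      ∀ w : EuclideanSpace ℝ (Fin N) → ℝ,
        (∀ x ∈ Metric.ball x₀ (2 * R), DifferentiableAt ℝ w x) →
        ContinuousOn (fun x => gradient w x) (Metric.ball x₀ (2 * R)) →
        ContinuousOn w (closure (Metric.ball x₀ (2 * R))) →
        (∀ φ : EuclideanSpace ℝ (Fin N) → ℝ, ContDiff ℝ (⊤ : ℕ∞) φ → HasCompactSupport φ →
          tsupport φ ⊆ Metric.ball x₀ (2 * R) →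
          (∫ x in Metric.ball x₀ (2 * R),
            ‖gradient w x‖ ^ (p - 2) * ⟪gradient w x, gradient φ x⟫_ℝ) = 0) →
        Set.EqOn w u (Metric.sphere x₀ (2 * R)) →
        sSup ((fun x => |w x|) '' Metric.ball x₀ (2 * R)) ≤
          sSup ((fun x => |u x|) '' Metric.ball x₀ (2 * R)) →
        IntegrableOn (fun x => ‖gradient w x‖ ^ p) (Metric.ball x₀ (2 * R)) volume →
        (∫ x in Metric.ball x₀ (2 * R), ‖gradient w x‖ ^ p) ≤
          (∫ x in Metric.ball x₀ (2 * R), ‖gradient u x‖ ^ p) →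
        (∫ x in Metric.ball x₀ (2 * R),
            (‖gradient u x‖ ^ p / p + δ * Fgam γ lp lm (u x))) ≤
          (∫ x in Metric.ball x₀ (2 * R),
            (‖gradient w x‖ ^ p / p + δ * Fgam γ lp lm (w x))) →
        ((γ ≤ 1 →
            (∫ x in Metric.ball x₀ R,
                ‖Vmap N p (gradient u x) - Vmap N p (gradient w x)‖ ^ (2 : ℝ)) ≤
              C * R ^ ((N : ℝ) + p * γ / (2 - γ))) ∧
          (1 ≤ γ →
            (∫ x in Metric.ball x₀ R,
                ‖Vmap N p (gradient u x) - Vmap N p (gradient w x)‖ ^ (2 : ℝ)) ≤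
              C * R ^ ((N : ℝ) + p))) := by
  obtain ⟨C, hC, h⟩ := main_est N hN p γ lp lm δ₀ M hp1 hp2 hγ0 hlp hlm hδ₀ hM
  refine ⟨C, hC, ?_⟩
  intro Ω hΩ _ δ hδ hδ1 u hu x₀ R hR hsub hb w h1 h2 h3 h4 h5 h6 h7 h8 h9
  have key := h Ω hΩ δ hδ hδ1 u hu x₀ R hR hsub hb w h1 h2 h3 h4 h5 h6 h7 h8 h9
  constructor
  · intro hγ
    rwa [min_eq_left hγ] at key
  · intro hγ
    rw [min_eq_right hγ] at key
    have e : p * 1 / (2 - 1) = p := by norm_num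
    rwa [e] at key
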